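/- arXiv:2407.08438 — 3 statements merged into one kernel-verified Lean document; each statement's English description precedes it below -/
import Mathlib

section
/- Let K and L be number fields and let k, l ≥ 1 be integers. Suppose there is a factor map from 𝔻_{K,k} to 𝔻_{L,l}, i.e., a surjective additive group homomorphism A : 𝓞_K → 𝓞_L and a continuous surjection f : 𝕏_{K,k} → 𝕏_{L,l} satisfying f(t + X) = A(t) + f(X) for all t ∈ 𝓞_K and X ∈ 𝕏_{K,k}. Then K and L are isomorphic as fields and k = l. -/
open NumberField

/-- The product (Cantor) topology on the power set `𝒫(G) ≅ {0,1}^G`. -/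
noncomputable instance powerSetTopology (G : Type*) : TopologicalSpace (Set G) :=
  TopologicalSpace.induced
    (fun (S : Set G) (g : G) => @decide (g ∈ S) (Classical.propDecidable _))
    inferInstance

/-- The shift space `𝕏_{K,k}` of admissible sets: subsets of `𝓞 K` missing at least
one residue class modulo `𝔭^k` for every nonzero prime ideal `𝔭`. -/
def admissibleSets (K : Type*) [Field K] [NumberField K] (k : ℕ) : Set (Set (𝓞 K)) :=
  {X | ∀ P : Ideal (𝓞 K), P.IsPrime → P ≠ ⊥ → ∃ c : 𝓞 K, ∀ y ∈ X, y - c ∉ P ^ k}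


open IsDedekindDomain

lemma fsr_mul_mem (L : Type*) [Field L] [NumberField L] :
    ∃ (α : 𝓞 L) (m : ℤ), α ≠ 0 ∧ m ≠ 0 ∧ ∀ x : 𝓞 L, (m : 𝓞 L) * x ∈ Algebra.adjoin ℤ {α} := by
  obtain ⟨α0, hα0⟩ := Field.exists_primitive_element ℚ L
  obtain ⟨⟨a, b⟩, hab⟩ := IsLocalization.surj (Algebra.algebraMapSubmonoid (𝓞 L) (nonZeroDivisors ℤ)) α0
  obtain ⟨⟨b, c, hc, rfl⟩, hab⟩ : ∃ b : Algebra.algebraMapSubmonoid (𝓞 L) (nonZeroDivisors ℤ), α0 * algebraMap (𝓞 L) L b = algebraMap (𝓞 L) L a := ⟨b, hab⟩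
  have hc0 : c ≠ 0 := nonZeroDivisors.ne_zero hc
  -- choose α nonzero
  have key : ∃ (α : 𝓞 L) (c : ℤ) (d : ℤ), c ≠ 0 ∧ α ≠ 0 ∧ (c : L) * α0 = (α : L) + d := by
    by_cases ha : a = 0
    · refine ⟨1, c, -1, hc0, one_ne_zero, ?_⟩
      subst ha
      simp at hab
      rcases hab with h | h
      · simp [h]
      · exact absurd h hc0
    · refine ⟨a, c, 0, hc0, ha, ?_⟩
      simp at hab ⊢
      rw [mul_comm]; exact hab
  obtain ⟨α, c, d, hc, hα, h⟩ := key
  have hc' : (c : L) ≠ 0 := by exact_mod_cast hc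
  have h1 : ∀ x : L, ∃ m : ℤ, m ≠ 0 ∧ ∃ y ∈ Algebra.adjoin ℤ {α}, (m : L) * x = (y : 𝓞 L) := by
    intro x
    have hx : x ∈ Algebra.adjoin ℚ {α0} := by
      have : x ∈ IntermediateField.adjoin ℚ {α0} := by rw [hα0]; trivial
      rwa [← IntermediateField.mem_toSubalgebra, IntermediateField.adjoin_simple_toSubalgebra_of_isAlgebraic (Algebra.IsAlgebraic.isAlgebraic α0)] at this
    induction hx using Algebra.adjoin_induction with
    | mem x hx =>
      obtain rfl : x = α0 := hx
      refine ⟨c, hc, α + d, add_mem (Algebra.subset_adjoin rfl) (intCast_mem _ _), ?_⟩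
      rw [h]; simp
    | algebraMap r =>
      refine ⟨r.den, by simp, r.num, intCast_mem _ _, ?_⟩
      have := r.den_mul_eq_num
      simp only [eq_ratCast, Int.cast_natCast, map_intCast]
      exact_mod_cast congrArg (fun z : ℚ => (z : L)) this
    | add x y _ _ hx hy =>
      obtain ⟨m, hm, u, hu, hmu⟩ := hx
      obtain ⟨n, hn, v, hv, hnv⟩ := hy
      refine ⟨m * n, mul_ne_zero hm hn, n * u + m * v, add_mem (mul_mem (intCast_mem _ _) hu) (mul_mem (intCast_mem _ _) hv), ?_⟩
      push_cast
      simp [← hmu, ← hnv]; ring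
    | mul x y _ _ hx hy =>
      obtain ⟨m, hm, u, hu, hmu⟩ := hx
      obtain ⟨n, hn, v, hv, hnv⟩ := hy
      refine ⟨m * n, mul_ne_zero hm hn, u * v, mul_mem hu hv, ?_⟩
      push_cast
      simp only [← hmu, ← hnv]; ring
  have h2 : ∀ x : 𝓞 L, ∃ m : ℤ, m ≠ 0 ∧ (m : 𝓞 L) * x ∈ Algebra.adjoin ℤ {α} := by
    intro x
    obtain ⟨m, hm, y, hy, hxy⟩ := h1 x
    refine ⟨m, hm, ?_⟩
    have : (m : 𝓞 L) * x = y := by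
      apply RingOfIntegers.coe_injective
      simpa using hxy
    rwa [this]
  choose m hm hm' using h2
  let b := RingOfIntegers.basis L
  refine ⟨α, ∏ i, m (b i), hα, Finset.prod_ne_zero_iff.2 fun i _ => hm _, fun x => ?_⟩
  rw [← b.sum_repr x, Finset.mul_sum]
  refine sum_mem fun i _ => ?_
  rw [← Finset.mul_prod_erase _ _ (Finset.mem_univ i), zsmul_eq_mul]
  push_cast
  have : (m (b i) : 𝓞 L) * (∏ x ∈ Finset.univ.erase i, (m (b x) : 𝓞 L)) * ((b.repr x i : 𝓞 L) * b i)
    = (∏ x ∈ Finset.univ.erase i, (m (b x) : 𝓞 L)) * (b.repr x i : 𝓞 L) * (m (b i) * b i) := by ring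
  rw [this]
  exact mul_mem (mul_mem (prod_mem fun i _ => intCast_mem _ _) (intCast_mem _ _)) (hm' _)

lemma fsr_exists_nonunit {L : Type*} [Field L] [NumberField L] (α : 𝓞 L) (hα : α ≠ 0) (Q : ℕ)
    (hQ : Q ≠ 0) : ∃ t : ℕ, ¬ IsUnit (1 - (Q : 𝓞 L) * t * α) := by
  have hσ : ∀ σ : L →ₐ[ℚ] ℂ, ∃ t0 : ℕ, ∀ t ≥ t0, 1 < ‖σ ((1 - (Q : 𝓞 L) * t * α : 𝓞 L) : L)‖ := by
    intro σ
    have hs : 0 < ‖σ (α : L)‖ := by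
      rw [norm_pos_iff]; simpa using hα
    obtain ⟨t0, ht0⟩ := exists_nat_gt (2 / ‖σ (α : L)‖)
    refine ⟨t0, fun t ht => ?_⟩
    rw [div_lt_iff₀ hs] at ht0
    have hQ1 : (1 : ℝ) ≤ Q := by exact_mod_cast Nat.one_le_iff_ne_zero.2 hQ
    have ht' : (t0 : ℝ) ≤ t := by exact_mod_cast ht
    have e : σ ((1 - (Q : 𝓞 L) * t * α : 𝓞 L) : L) = 1 - Q * t * σ α := by simp
    rw [e]
    have h1 : ‖(Q * t * σ α : ℂ)‖ - ‖(1 : ℂ)‖ ≤ ‖1 - (Q * t * σ α : ℂ)‖ := by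
      rw [norm_sub_rev]; exact norm_sub_norm_le _ _
    simp only [norm_mul, Complex.norm_natCast, norm_one] at h1
    have h2 : (t0 : ℝ) * ‖σ (α : L)‖ ≤ Q * t * ‖σ (α : L)‖ := by
      have : (t0 : ℝ) ≤ Q * t := by nlinarith
      gcongr
    linarith
  choose t0 ht0 using hσ
  refine ⟨∑ σ, t0 σ, fun hu => ?_⟩
  rw [NumberField.isUnit_iff_norm] at hu
  set z : 𝓞 L := 1 - (Q : 𝓞 L) * (∑ σ, t0 σ : ℕ) * α with hz
  have h3 : ‖(algebraMap ℚ ℂ (Algebra.norm ℚ (z : L)))‖ = 1 := by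
    have : ((|(RingOfIntegers.norm ℚ z : ℚ)| : ℚ) : ℝ) = 1 := by rw [hu]; simp
    rw [eq_ratCast, Complex.norm_ratCast]
    simpa using this
  rw [Algebra.norm_eq_prod_embeddings, norm_prod] at h3
  have : (1 : ℝ) < ∏ σ : L →ₐ[ℚ] ℂ, ‖σ (z : L)‖ := by
    have := Finset.prod_lt_prod_of_nonempty (s := (Finset.univ : Finset (L →ₐ[ℚ] ℂ))) (f := fun _ => (1:ℝ)) (g := fun σ => ‖σ (z : L)‖) (fun _ _ => one_pos) (fun σ _ => ht0 σ _ (Finset.single_le_sum (f := t0) (fun _ _ => Nat.zero_le _) (Finset.mem_univ σ))) ⟨(inferInstance : Nonempty (L →+* ℂ)).some.toRatAlgHom, Finset.mem_univ _⟩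
    simpa using this
  linarith

lemma fsr_prime_under {L : Type*} [Field L] [NumberField L] (P : Ideal (𝓞 L)) (hP : P.IsPrime)
    (h0 : P ≠ ⊥) : ∃ q : ℕ, q.Prime ∧ (q : 𝓞 L) ∈ P := by
  have h : (Ideal.absNorm P : 𝓞 L) ∈ P := Ideal.absNorm_mem P
  have hn : Ideal.absNorm P ≠ 0 := by rwa [Ne, Ideal.absNorm_eq_zero_iff]
  generalize Ideal.absNorm P = N at h hn
  induction N using Nat.recOnMul with
  | zero => exact absurd rfl hn
  | one => exact absurd ((Ideal.eq_top_iff_one _).2 (by simpa using h)) hP.ne_top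
  | prime p hp => exact ⟨p, hp, h⟩
  | mul a b ha hb =>
    rw [Nat.cast_mul] at h
    rcases hP.mem_or_mem h with h | h
    · exact ha h (left_ne_zero_of_mul hn)
    · exact hb h (right_ne_zero_of_mul hn)

lemma fsr_coprime_notMem {L : Type*} [Field L] [NumberField L] {P : Ideal (𝓞 L)} (hP : P ≠ ⊤)
    {q : ℕ} (hqP : (q : 𝓞 L) ∈ P) {n : ℤ} (hn : (n : 𝓞 L) ∈ P) (hq : q.Prime) : (q : ℤ) ∣ n := by
  by_contra h
  have hco : IsCoprime (q : ℤ) n := (Prime.coprime_iff_not_dvd (Nat.prime_iff_prime_int.1 hq)).2 h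
  obtain ⟨a, b, hab⟩ := hco
  apply hP
  rw [Ideal.eq_top_iff_one]
  have : (1 : 𝓞 L) = a * q + b * n := by exact_mod_cast (congrArg (Int.cast : ℤ → 𝓞 L) hab).symm
  rw [this]
  exact add_mem (P.mul_mem_left _ hqP) (P.mul_mem_left _ hn)

lemma fsr_degree_one (L : Type*) [Field L] [NumberField L] (Q : ℕ) (hQ : Q ≠ 0) :
    ∃ (P : Ideal (𝓞 L)) (q : ℕ), P.IsPrime ∧ P ≠ ⊥ ∧ q.Prime ∧ (q : 𝓞 L) ∈ P ∧
      (q : 𝓞 L) ∉ P ^ 2 ∧ (Q : 𝓞 L) ∉ P ∧ ∀ x : 𝓞 L, ∃ n : ℤ, x - n ∈ P := by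
  obtain ⟨α, m, hα, hm, hmem⟩ := fsr_mul_mem L
  have hd := NumberField.discr_ne_zero L
  set Q' := Q * m.natAbs * (discr L).natAbs with hQ'
  have hQ'0 : Q' ≠ 0 := by simp [hQ', hQ, hm, hd]
  obtain ⟨t, ht⟩ := fsr_exists_nonunit α hα Q' hQ'0
  set w := 1 - (Q' : 𝓞 L) * t * α with hw
  obtain ⟨P, hPmax, hwP⟩ := exists_max_ideal_of_mem_nonunits (mem_nonunits_iff.2 ht)
  have hP := hPmax.isPrime
  have h0 : P ≠ ⊥ := Ring.ne_bot_of_isMaximal_of_not_isField hPmax (RingOfIntegers.not_isField L)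
  obtain ⟨q, hq, hqP⟩ := fsr_prime_under P hP h0
  have hout : ∀ x : 𝓞 L, (x ∣ (Q' : 𝓞 L) * t) → x ∉ P := by
    rintro x ⟨y, hy⟩ hx
    apply hP.ne_top
    rw [Ideal.eq_top_iff_one]
    have : (1 : 𝓞 L) = w + (x * (y * α)) := by rw [hw, hy]; ring
    rw [this]
    exact add_mem hwP (P.mul_mem_right _ hx)
  -- divisibility
  have hmP : (m : 𝓞 L) ∉ P := by
    apply hout
    have : (m : ℤ) ∣ (Q' * t : ℤ) := by
      rw [hQ']; push_cast
      exact ((((self_dvd_abs m).mul_left _).mul_right _).mul_right _)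
    have := (Int.castRingHom (𝓞 L)).map_dvd this
    simpa using this
  have hdP : ((discr L : ℤ) : 𝓞 L) ∉ P := by
    apply hout
    have : (discr L : ℤ) ∣ (Q' * t : ℤ) := by
      rw [hQ']; push_cast
      exact (((self_dvd_abs (discr L)).mul_left _).mul_right _)
    have := (Int.castRingHom (𝓞 L)).map_dvd this
    simpa using this
  have hinv : ∀ n : ℤ, (n : 𝓞 L) ∉ P → ∃ n' : ℤ, (n * n' - 1 : 𝓞 L) ∈ P := by
    intro n hn
    have : ¬ (q : ℤ) ∣ n := by
      rintro ⟨c, rfl⟩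
      apply hn; push_cast; exact P.mul_mem_right _ hqP
    have hco : IsCoprime (q : ℤ) n := (Prime.coprime_iff_not_dvd (Nat.prime_iff_prime_int.1 hq)).2 this
    obtain ⟨a, b, hab⟩ := hco
    refine ⟨b, ?_⟩
    have : (n * b - 1 : 𝓞 L) = - (a * q) := by
      have := congrArg (Int.cast : ℤ → 𝓞 L) hab
      push_cast at this
      linear_combination this
    rw [this]
    exact neg_mem (P.mul_mem_left _ hqP)
  have hαn : ∃ n : ℤ, α - n ∈ P := by
    have : ((Q' * t : ℤ) : 𝓞 L) ∉ P := hout _ (by push_cast; exact dvd_rfl)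
    obtain ⟨n, hn⟩ := hinv _ this
    refine ⟨n, ?_⟩
    have : α - n = - (α * (((Q' * t : ℤ) : 𝓞 L) * n - 1)) - n * w := by
      rw [hw]; push_cast; ring
    rw [this]
    exact sub_mem (neg_mem (P.mul_mem_left _ hn)) (P.mul_mem_left _ hwP)
  have hadj : ∀ x ∈ Algebra.adjoin ℤ {α}, ∃ n : ℤ, x - n ∈ P := by
    intro x hx
    induction hx using Algebra.adjoin_induction with
    | mem x hx => obtain rfl : x = α := hx; exact hαn
    | algebraMap r => exact ⟨r, by simp⟩
    | add x y _ _ hx hy =>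
      obtain ⟨a, ha⟩ := hx
      obtain ⟨b, hb⟩ := hy
      refine ⟨a + b, ?_⟩
      have : x + y - ((a + b : ℤ) : 𝓞 L) = (x - a) + (y - b) := by push_cast; ring
      rw [this]; exact add_mem ha hb
    | mul x y _ _ hx hy =>
      obtain ⟨a, ha⟩ := hx
      obtain ⟨b, hb⟩ := hy
      refine ⟨a * b, ?_⟩
      have : x * y - ((a * b : ℤ) : 𝓞 L) = y * (x - a) + a * (y - b) := by push_cast; ring
      rw [this]; exact add_mem (P.mul_mem_left _ ha) (P.mul_mem_left _ hb)
  refine ⟨P, q, hP, h0, hq, hqP, ?_, ?_, ?_⟩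
  · have hqd : ¬ (q : ℤ) ∣ discr L := by
      rintro ⟨c, hc⟩
      apply hdP; rw [hc]; push_cast; exact P.mul_mem_right _ hqP
    have hur := (NumberField.not_dvd_discr_iff_forall_mem L (𝓞 L) (Nat.prime_iff_prime_int.1 hq)).1 hqd P hP (by simpa using hqP)
    rw [← not_dvd_differentIdeal_iff] at hur
    intro hq2
    apply hur
    have : (Ideal.span {(q : ℤ)}).IsMaximal :=
      Ideal.IsPrime.isMaximal ((Ideal.span_singleton_prime (by simpa using hq.ne_zero)).2
        (Nat.prime_iff_prime_int.1 hq)) (by simpa using hq.ne_zero)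
    have := pow_sub_one_dvd_differentIdeal ℤ (p := Ideal.span {(q : ℤ)}) P 2
      (by simpa using hq.ne_zero) (by
        rw [Ideal.dvd_iff_le, Ideal.map_span, Set.image_singleton,
          Ideal.span_singleton_le_iff_mem]
        simpa using hq2)
    simpa using this
  · apply hout
    have : Q ∣ Q' * t := by
      rw [hQ', mul_assoc, mul_assoc]; exact dvd_mul_right _ _
    have := (Nat.castRingHom (𝓞 L)).map_dvd this
    simpa using this
  · intro x
    obtain ⟨a, ha⟩ := hadj _ (hmem x)
    obtain ⟨m', hm'⟩ := hinv m hmP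
    refine ⟨m' * a, ?_⟩
    have : x - ((m' * a : ℤ) : 𝓞 L) = m' * (m * x - a) - x * (m * m' - 1) := by push_cast; ring
    rw [this]
    exact sub_mem (P.mul_mem_left _ ha) (P.mul_mem_left _ hm')

lemma fsr_absNorm_natCast (K : Type*) [Field K] [NumberField K] (q : ℕ) :
    Ideal.absNorm (Ideal.span {(q : 𝓞 K)}) = q ^ Module.finrank ℚ K := by
  rw [Ideal.absNorm_span_singleton]
  have := Algebra.norm_algebraMap (R := ℤ) (S := 𝓞 K) q
  rw [RingOfIntegers.rank] at this
  simp at this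
  rw [this]; simp [Int.natAbs_pow]

lemma fsr_absNorm_dvd {K : Type*} [Field K] [NumberField K] {P : Ideal (𝓞 K)} {q : ℕ}
    (hq : (q : 𝓞 K) ∈ P) : Ideal.absNorm P ∣ q ^ Module.finrank ℚ K := by
  rw [← fsr_absNorm_natCast]
  exact Ideal.absNorm_dvd_absNorm_of_le ((Ideal.span_singleton_le_iff_mem _).2 hq)

lemma fsr_le_absNorm {K : Type*} [Field K] [NumberField K] {P : Ideal (𝓞 K)} {q : ℕ}
    (hP : P ≠ ⊤) (hqp : q.Prime) (hq : (q : 𝓞 K) ∈ P) : q ≤ Ideal.absNorm P := by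
  obtain ⟨i, hi, h⟩ := (Nat.dvd_prime_pow hqp).1 (fsr_absNorm_dvd hq)
  rw [h]
  rcases Nat.eq_zero_or_pos i with rfl | hi
  · rw [pow_zero, Ideal.absNorm_eq_one_iff] at h; exact absurd h hP
  · exact Nat.le_self_pow hi.ne' q

lemma fsr_two_le_absNorm {K : Type*} [Field K] [NumberField K] (P : HeightOneSpectrum (𝓞 K)) :
    2 ≤ Ideal.absNorm P.asIdeal := by
  obtain ⟨q, hq, hqP⟩ := fsr_prime_under P.asIdeal P.isPrime P.ne_bot
  exact hq.two_le.trans (fsr_le_absNorm P.isPrime.ne_top hq hqP)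

lemma fsr_card_over {K : Type*} [Field K] [NumberField K] {q : ℕ} (hq : q.Prime)
    (T : Finset (HeightOneSpectrum (𝓞 K))) (hT : ∀ P ∈ T, (q : 𝓞 K) ∈ P.asIdeal) :
    T.card ≤ Module.finrank ℚ K := by
  classical
  have hinj : Function.Injective (HeightOneSpectrum.asIdeal : HeightOneSpectrum (𝓞 K) → _) :=
    fun _ _ h => HeightOneSpectrum.ext h
  have h := Finset.prod_primes_dvd (s := T.image HeightOneSpectrum.asIdeal)
    (Ideal.span {(q : 𝓞 K)}) (by
      intro a ha
      obtain ⟨P, hP, rfl⟩ := Finset.mem_image.1 ha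
      exact P.prime) (by
      intro a ha
      obtain ⟨P, hP, rfl⟩ := Finset.mem_image.1 ha
      rw [Ideal.dvd_span_singleton]
      exact hT P hP)
  rw [Finset.prod_image (fun _ _ _ _ h => hinj h)] at h
  have h2 := map_dvd Ideal.absNorm h
  rw [fsr_absNorm_natCast, map_prod] at h2
  have h3 := Nat.le_of_dvd (pow_pos hq.pos _) h2
  have h4 : q ^ T.card ≤ ∏ P ∈ T, Ideal.absNorm P.asIdeal := by
    rw [← Finset.prod_const]
    exact Finset.prod_le_prod' fun P hP => fsr_le_absNorm P.isPrime.ne_top hq (hT P hP)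
  exact (Nat.pow_le_pow_iff_right hq.one_lt).1 (h4.trans h3)

lemma fsr_le_sup {K : Type*} [Field K] [NumberField K] {P : Ideal (𝓞 K)} (hP : P.IsPrime)
    (h0 : P ≠ ⊥) {q : 𝓞 K} (hq : q ∈ P) (hq2 : q ∉ P ^ 2) {l : ℕ} (hl : 1 ≤ l) :
    P ≤ P ^ l ⊔ Ideal.span {q} := by
  obtain ⟨J, hJ⟩ := (Ideal.dvd_span_singleton).2 hq
  have hJP : ¬ J ≤ P := by
    intro h
    apply hq2
    rw [← Ideal.span_singleton_le_iff_mem, hJ, pow_two]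
    exact Ideal.mul_mono_right h
  have hmax := hP.isMaximal h0
  have hco : P ⊔ J = ⊤ := by
    by_contra hne
    obtain ⟨M, hM, hle⟩ := Ideal.exists_le_maximal _ hne
    have := hmax.eq_of_le hM.ne_top (le_sup_left.trans hle)
    exact hJP (this ▸ le_sup_right.trans hle)
  have hco2 : P ^ (l - 1) ⊔ J = ⊤ := Ideal.pow_sup_eq_top hco
  obtain ⟨n, rfl⟩ : ∃ n, l = n + 1 := ⟨l - 1, by omega⟩
  rw [hJ, pow_succ', ← Ideal.mul_sup]
  simp at hco2
  rw [hco2, Ideal.mul_top]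

lemma fsr_card_quot {K : Type*} [Field K] [NumberField K] (P : Ideal (𝓞 K)) (k : ℕ) :
    Nat.card (𝓞 K ⧸ P ^ k) = Ideal.absNorm P ^ k := by
  rw [← map_pow, Ideal.absNorm_apply, Submodule.cardQuot_apply]

lemma fsr_finite_quot {K : Type*} [Field K] [NumberField K] {P : Ideal (𝓞 K)} (hP : P ≠ ⊥) (k : ℕ) :
    Finite (𝓞 K ⧸ P ^ k) := by
  apply Nat.finite_of_card_ne_zero
  rw [fsr_card_quot]
  exact pow_ne_zero _ (by rwa [Ne, Ideal.absNorm_eq_zero_iff])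

lemma fsr_finite_norm_le (K : Type*) [Field K] [NumberField K] (n : ℕ) :
    {P : HeightOneSpectrum (𝓞 K) | Ideal.absNorm P.asIdeal ≤ n}.Finite := by
  have hinj : Function.Injective (HeightOneSpectrum.asIdeal : HeightOneSpectrum (𝓞 K) → _) :=
    fun _ _ h => HeightOneSpectrum.ext h
  exact (Ideal.finite_setOfPred_absNorm_le (S := 𝓞 K) n).preimage hinj.injOn

/-- bounded sum of inverse norms -/
lemma fsr_sum_bound (K : Type*) [Field K] [NumberField K] (l : ℕ) (hl : 2 ≤ l) :
    ∃ C : ℝ, ∀ T : Finset (HeightOneSpectrum (𝓞 K)),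
      ∑ P ∈ T, ((Ideal.absNorm P.asIdeal : ℝ) ^ l)⁻¹ ≤ C := by
  classical
  have hq : ∀ P : HeightOneSpectrum (𝓞 K), ∃ q : ℕ, q.Prime ∧ (q : 𝓞 K) ∈ P.asIdeal :=
    fun P => fsr_prime_under P.asIdeal P.isPrime P.ne_bot
  choose q hq hqP using hq
  have hs : Summable fun n : ℕ => ((n : ℝ) ^ 2)⁻¹ := Real.summable_nat_pow_inv.2 one_lt_two
  refine ⟨Module.finrank ℚ K * ∑' n : ℕ, ((n : ℝ) ^ 2)⁻¹, fun T => ?_⟩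
  calc ∑ P ∈ T, ((Ideal.absNorm P.asIdeal : ℝ) ^ l)⁻¹
      ≤ ∑ P ∈ T, ((q P : ℝ) ^ 2)⁻¹ := by
        refine Finset.sum_le_sum fun P _ => ?_
        have h1 : (q P : ℝ) ≤ Ideal.absNorm P.asIdeal := by
          exact_mod_cast fsr_le_absNorm P.isPrime.ne_top (hq P) (hqP P)
        have h0 : (1 : ℝ) ≤ q P := by exact_mod_cast (hq P).one_le
        have h2 : (q P : ℝ) ^ 2 ≤ (Ideal.absNorm P.asIdeal : ℝ) ^ l :=
          (pow_le_pow_right₀ h0 hl).trans (by gcongr)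
        gcongr
    _ = ∑ n ∈ T.image q, ∑ P ∈ T with q P = n, ((q P : ℝ) ^ 2)⁻¹ := by
        rw [Finset.sum_fiberwise_of_maps_to]
        exact fun P hP => Finset.mem_image_of_mem q hP
    _ ≤ ∑ n ∈ T.image q, Module.finrank ℚ K * ((n : ℝ) ^ 2)⁻¹ := by
        refine Finset.sum_le_sum fun n hn => ?_
        obtain ⟨P0, hP0, rfl⟩ := Finset.mem_image.1 hn
        rw [Finset.sum_congr rfl (g := fun _ => ((q P0 : ℝ) ^ 2)⁻¹)
          (fun P hP => by rw [(Finset.mem_filter.1 hP).2]), Finset.sum_const, nsmul_eq_mul]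
        gcongr
        apply fsr_card_over (hq P0)
        intro P hP
        rw [← (Finset.mem_filter.1 hP).2]; exact hqP P
    _ ≤ _ := by
        rw [← Finset.mul_sum]
        gcongr
        exact hs.sum_le_tsum _ (fun _ _ => by positivity)

lemma fsr_prod_bound (K : Type*) [Field K] [NumberField K] (l : ℕ) (hl : 2 ≤ l) :
    ∃ δ : ℝ, 0 < δ ∧ ∀ T : Finset (HeightOneSpectrum (𝓞 K)),
      δ ≤ ∏ P ∈ T, (1 - ((Ideal.absNorm P.asIdeal : ℝ) ^ l)⁻¹) := by
  obtain ⟨C, hC⟩ := fsr_sum_bound K l hl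
  refine ⟨Real.exp (-(2 * C)), Real.exp_pos _, fun T => ?_⟩
  calc Real.exp (-(2 * C)) ≤ Real.exp (∑ P ∈ T, -(2 * ((Ideal.absNorm P.asIdeal : ℝ) ^ l)⁻¹)) := by
        rw [Finset.sum_neg_distrib, ← Finset.mul_sum]
        have := hC T
        gcongr
    _ = ∏ P ∈ T, Real.exp (-(2 * ((Ideal.absNorm P.asIdeal : ℝ) ^ l)⁻¹)) := Real.exp_sum _ _
    _ ≤ _ := by
        refine Finset.prod_le_prod (fun _ _ => (Real.exp_pos _).le) fun P _ => ?_
        have h2 : (2 : ℝ) ≤ Ideal.absNorm P.asIdeal := by exact_mod_cast fsr_two_le_absNorm P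
        have h3 : (2 : ℝ) ≤ (Ideal.absNorm P.asIdeal : ℝ) ^ l :=
          h2.trans (le_self_pow₀ (by linarith) (by omega))
        set a := ((Ideal.absNorm P.asIdeal : ℝ) ^ l)⁻¹
        have ha : a ≤ 1 / 2 := by
          rw [one_div]; exact inv_anti₀ two_pos h3
        have ha0 : 0 ≤ a := by positivity
        rw [Real.exp_neg, inv_le_comm₀ (Real.exp_pos _) (by linarith)]
        have : (1 - a)⁻¹ ≤ 1 + 2 * a := by
          rw [inv_le_iff_one_le_mul₀ (by linarith)]; nlinarith
        linarith [Real.add_one_le_exp (2 * a)]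

lemma fsr_prod_gap (K : Type*) [Field K] [NumberField K] (k l : ℕ) (hk : 1 ≤ k) (hkl : k < l) :
    ∃ (δ : ℝ) (S : Finset (HeightOneSpectrum (𝓞 K))),
      (∀ T : Finset (HeightOneSpectrum (𝓞 K)),
        δ ≤ ∏ P ∈ T, (1 - ((Ideal.absNorm P.asIdeal : ℝ) ^ l)⁻¹)) ∧
      ∏ P ∈ S, (1 - ((Ideal.absNorm P.asIdeal : ℝ) ^ k)⁻¹) < δ := by
  classical
  obtain ⟨δ0, hδ0, hb⟩ := fsr_prod_bound K l (by omega)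
  set F : Finset (HeightOneSpectrum (𝓞 K)) → ℝ :=
    fun T => ∏ P ∈ T, (1 - ((Ideal.absNorm P.asIdeal : ℝ) ^ l)⁻¹) with hF
  have hbdd : BddBelow (Set.range F) := ⟨δ0, by rintro _ ⟨T, rfl⟩; exact hb T⟩
  set δ := ⨅ T, F T with hδ
  have hδpos : 0 < δ := hδ0.trans_le (le_ciInf hb)
  obtain ⟨M, hM⟩ := Ideal.exists_maximal (𝓞 K)
  let P0 : HeightOneSpectrum (𝓞 K) := ⟨M, hM.isPrime,
    Ring.ne_bot_of_isMaximal_of_not_isField hM (RingOfIntegers.not_isField K)⟩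
  have h2 : ∀ P : HeightOneSpectrum (𝓞 K), (2 : ℝ) ≤ Ideal.absNorm P.asIdeal := fun P => by
    exact_mod_cast fsr_two_le_absNorm P
  have hlt1 : ∀ P : HeightOneSpectrum (𝓞 K), ∀ j, 1 ≤ j →
      0 < 1 - ((Ideal.absNorm P.asIdeal : ℝ) ^ j)⁻¹ := fun P j hj => by
    have : 1 < (Ideal.absNorm P.asIdeal : ℝ) ^ j := one_lt_pow₀ (by linarith [h2 P]) (by omega)
    linarith [inv_lt_one_of_one_lt₀ this]
  have hmono : ∀ P : HeightOneSpectrum (𝓞 K), 1 - ((Ideal.absNorm P.asIdeal : ℝ) ^ k)⁻¹ <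
      1 - ((Ideal.absNorm P.asIdeal : ℝ) ^ l)⁻¹ := fun P => by
    have h2 := h2 P
    have : (Ideal.absNorm P.asIdeal : ℝ) ^ k < (Ideal.absNorm P.asIdeal : ℝ) ^ l :=
      pow_lt_pow_right₀ (by linarith) hkl
    have := inv_strictAnti₀ (by positivity) this
    linarith
  set x := 1 - ((Ideal.absNorm P0.asIdeal : ℝ) ^ k)⁻¹
  set y := 1 - ((Ideal.absNorm P0.asIdeal : ℝ) ^ l)⁻¹ with hy
  have hxy : x < y := hmono P0
  have hx : 0 < x := hlt1 P0 k hk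
  have hyp : 0 < y := hx.trans hxy
  have : δ < δ * (y / x) := by
    rw [lt_mul_iff_one_lt_right hδpos, one_lt_div hx]; exact hxy
  obtain ⟨T, hT⟩ := exists_lt_of_ciInf_lt this
  refine ⟨δ, insert P0 T, fun T => ciInf_le hbdd T, ?_⟩
  have hle : F (insert P0 T) ≤ F T := by
    by_cases h : P0 ∈ T
    · rw [Finset.insert_eq_of_mem h]
    · rw [hF]; simp only
      rw [Finset.prod_insert h]
      apply mul_le_of_le_one_left (Finset.prod_nonneg fun P _ => (hlt1 P l (by omega)).le)
      have : 0 ≤ ((Ideal.absNorm P0.asIdeal : ℝ) ^ l)⁻¹ := by positivity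
      linarith
  have h3 : F (insert P0 T) < δ * (y / x) := hle.trans_lt hT
  have hm : P0 ∈ insert P0 T := Finset.mem_insert_self _ _
  rw [← Finset.mul_prod_erase _ _ hm]
  simp only [hF] at h3
  rw [← Finset.mul_prod_erase _ _ hm] at h3
  have h4 : ∏ P ∈ (insert P0 T).erase P0, (1 - ((Ideal.absNorm P.asIdeal : ℝ) ^ k)⁻¹) ≤
      ∏ P ∈ (insert P0 T).erase P0, (1 - ((Ideal.absNorm P.asIdeal : ℝ) ^ l)⁻¹) :=
    Finset.prod_le_prod (fun P _ => (hlt1 P k hk).le) fun P _ => (hmono P).le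
  calc x * _ ≤ x * _ := mul_le_mul_of_nonneg_left h4 hx.le
    _ = (x / y) * (y * ∏ P ∈ (insert P0 T).erase P0, (1 - ((Ideal.absNorm P.asIdeal : ℝ) ^ l)⁻¹)) := by
        field_simp
    _ < (x / y) * (δ * (y / x)) := mul_lt_mul_of_pos_left h3 (by positivity)
    _ = δ := by field_simp

lemma fsr_isClopen_mem {G : Type*} (g : G) : IsClopen {S : Set G | g ∈ S} := by
  have hc : Continuous (fun (S : Set G) (g : G) => @decide (g ∈ S) (Classical.propDecidable _)) :=
    continuous_induced_dom
  have hg : Continuous (fun (S : Set G) => @decide (g ∈ S) (Classical.propDecidable _)) :=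
    (continuous_apply g).comp hc
  have := (isClopen_discrete ({true} : Set Bool)).preimage hg
  convert this using 1
  ext S; simp

lemma fsr_compactSpace (G : Type*) : CompactSpace (Set G) := by
  have hi : Topology.IsInducing
      (fun (S : Set G) (g : G) => @decide (g ∈ S) (Classical.propDecidable _)) := ⟨rfl⟩
  have hinj : Function.Injective
      (fun (S : Set G) (g : G) => @decide (g ∈ S) (Classical.propDecidable _)) := by
    intro S S' h
    ext g
    have := congrFun h g
    simpa using this
  have hsurj : Function.Surjective
      (fun (S : Set G) (g : G) => @decide (g ∈ S) (Classical.propDecidable _)) := by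
    intro h
    refine ⟨{g | h g = true}, ?_⟩
    funext g; simp
  have he : Topology.IsClosedEmbedding
      (fun (S : Set G) (g : G) => @decide (g ∈ S) (Classical.propDecidable _)) :=
    ⟨⟨hi, hinj⟩, by rw [hsurj.range_eq]; exact isClosed_univ⟩
  exact he.compactSpace

lemma fsr_nhd {G : Type*} {U : Set (Set G)} (hU : IsOpen U) {X : Set G} (hX : X ∈ U) :
    ∃ B : Finset G, ∀ X' : Set G, (∀ b ∈ B, b ∈ X' ↔ b ∈ X) → X' ∈ U := by
  obtain ⟨V, hV, rfl⟩ := isOpen_induced_iff.1 hU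
  obtain ⟨I, u, hu, hsub⟩ := isOpen_pi_iff.1 hV _ hX
  refine ⟨I, fun X' h => hsub ?_⟩
  intro i hi
  have := (hu i hi).2
  have e : (@decide (i ∈ X') (Classical.propDecidable _)) =
    (@decide (i ∈ X) (Classical.propDecidable _)) := by
    simp [h i hi]
  simp only at this ⊢
  rw [e]; exact this

lemma fsr_isClosed_adm (K : Type*) [Field K] [NumberField K] (k : ℕ) :
    IsClosed (admissibleSets K k) := by
  have : admissibleSets K k = ⋂ P : HeightOneSpectrum (𝓞 K), ⋃ c : 𝓞 K ⧸ P.asIdeal ^ k,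
      ⋂ y : 𝓞 K, ⋂ (_ : Ideal.Quotient.mk (P.asIdeal ^ k) y = c), {X : Set (𝓞 K) | y ∈ X}ᶜ := by
    ext X
    simp only [admissibleSets, Set.mem_ofPred_eq, Set.mem_iInter, Set.mem_iUnion, Set.mem_compl_iff]
    constructor
    · intro h P
      obtain ⟨c, hc⟩ := h P.asIdeal P.isPrime P.ne_bot
      exact ⟨Ideal.Quotient.mk _ c, fun y hy hyX => hc y hyX (Ideal.Quotient.eq.1 hy)⟩
    · intro h P hP h0
      obtain ⟨c, hc⟩ := h ⟨P, hP, h0⟩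
      obtain ⟨c, rfl⟩ := Ideal.Quotient.mk_surjective c
      exact ⟨c, fun y hy hyc => hc y (Ideal.Quotient.eq.2 hyc) hy⟩
  rw [this]
  refine isClosed_iInter fun P => ?_
  have := fsr_finite_quot P.ne_bot k
  refine isClosed_iUnion_of_finite fun c => isClosed_iInter fun y => isClosed_iInter fun _ => ?_
  exact (fsr_isClopen_mem y).compl.isClosed

lemma fsr_adm_subset {K : Type*} [Field K] [NumberField K] {k : ℕ} {X Y : Set (𝓞 K)}
    (hX : X ∈ admissibleSets K k) (h : Y ⊆ X) : Y ∈ admissibleSets K k := by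
  intro P hP h0
  obtain ⟨c, hc⟩ := hX P hP h0
  exact ⟨c, fun y hy => hc y (h hy)⟩

lemma fsr_adm_translate {K : Type*} [Field K] [NumberField K] {k : ℕ} {X : Set (𝓞 K)}
    (hX : X ∈ admissibleSets K k) (t : 𝓞 K) : (t + ·) '' X ∈ admissibleSets K k := by
  intro P hP h0
  obtain ⟨c, hc⟩ := hX P hP h0
  refine ⟨t + c, ?_⟩
  rintro _ ⟨y, hy, rfl⟩
  simpa using hc y hy

lemma fsr_block0 {K L : Type*} [Field K] [NumberField K] [Field L] [NumberField L] {k l : ℕ}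
    (f : ↥(admissibleSets K k) → ↥(admissibleSets L l)) (hf : Continuous f) :
    ∃ B : Finset (𝓞 K), ∀ X X' : ↥(admissibleSets K k),
      (∀ b ∈ B, b ∈ (X : Set (𝓞 K)) ↔ b ∈ (X' : Set (𝓞 K))) →
      ((0 : 𝓞 L) ∈ (f X : Set (𝓞 L)) ↔ (0 : 𝓞 L) ∈ (f X' : Set (𝓞 L))) := by
  classical
  have := fsr_compactSpace (𝓞 K)
  have hcomp : CompactSpace ↥(admissibleSets K k) :=
    isCompact_iff_compactSpace.1 (fsr_isClosed_adm K k).isCompact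
  have hclopen : IsClopen {X : ↥(admissibleSets K k) | (0 : 𝓞 L) ∈ (f X : Set (𝓞 L))} :=
    (fsr_isClopen_mem (0 : 𝓞 L)).preimage (continuous_subtype_val.comp hf)
  have h1 : ∀ X : ↥(admissibleSets K k), ∃ B : Finset (𝓞 K), ∀ X' : ↥(admissibleSets K k),
      (∀ b ∈ B, b ∈ (X' : Set (𝓞 K)) ↔ b ∈ (X : Set (𝓞 K))) →
      ((0 : 𝓞 L) ∈ (f X' : Set (𝓞 L)) ↔ (0 : 𝓞 L) ∈ (f X : Set (𝓞 L))) := by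
    intro X
    by_cases hX : (0 : 𝓞 L) ∈ (f X : Set (𝓞 L))
    · obtain ⟨U, hU, hUe⟩ := isOpen_induced_iff.1 hclopen.isOpen
      obtain ⟨B, hB⟩ := fsr_nhd hU (X := X) (by
        change X ∈ Subtype.val ⁻¹' U; rw [hUe]; exact hX)
      refine ⟨B, fun X' h => iff_of_true ?_ hX⟩
      have : X' ∈ Subtype.val ⁻¹' U := hB X' h
      rw [hUe] at this; exact this
    · obtain ⟨U, hU, hUe⟩ := isOpen_induced_iff.1 hclopen.compl.isOpen
      obtain ⟨B, hB⟩ := fsr_nhd hU (X := X) (by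
        change X ∈ Subtype.val ⁻¹' U; rw [hUe]; exact hX)
      refine ⟨B, fun X' h => iff_of_false ?_ hX⟩
      have : X' ∈ Subtype.val ⁻¹' U := hB X' h
      rw [hUe] at this; exact this
  choose B hB using h1
  obtain ⟨t, ht⟩ := CompactSpace.elim_nhds_subcover
    (fun X : ↥(admissibleSets K k) => {X' : ↥(admissibleSets K k) |
      ∀ b ∈ B X, b ∈ (X' : Set (𝓞 K)) ↔ b ∈ (X : Set (𝓞 K))}) (by
    intro X
    apply IsOpen.mem_nhds
    · have : {X' : ↥(admissibleSets K k) |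
          ∀ b ∈ B X, b ∈ (X' : Set (𝓞 K)) ↔ b ∈ (X : Set (𝓞 K))} =
          ⋂ b ∈ B X, {X' : ↥(admissibleSets K k) | b ∈ (X' : Set (𝓞 K)) ↔ b ∈ (X : Set (𝓞 K))} := by
        ext; simp
      rw [this]
      refine isOpen_biInter_finset fun b _ => ?_
      have hb : IsClopen {X' : ↥(admissibleSets K k) | b ∈ (X' : Set (𝓞 K))} :=
        (fsr_isClopen_mem b).preimage continuous_subtype_val
      by_cases h : b ∈ (X : Set (𝓞 K))
      · simpa [h] using hb.isOpen
      · simp only [h, iff_false]; exact hb.compl.isOpen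
    · simp)
  refine ⟨t.biUnion B, fun X X' h => ?_⟩
  have hX : X ∈ ⋃ x ∈ t, {X' : ↥(admissibleSets K k) |
      ∀ b ∈ B x, b ∈ (X' : Set (𝓞 K)) ↔ b ∈ (x : Set (𝓞 K))} := by rw [ht]; trivial
  simp only [Set.mem_iUnion] at hX
  obtain ⟨x, hx, hXx⟩ := hX
  rw [hB x X hXx, hB x X']
  intro b hb
  rw [← h b (Finset.mem_biUnion.2 ⟨x, hx, hb⟩)]
  exact hXx b hb

/-- Packaged block code property. -/
lemma fsr_block {K L : Type*} [Field K] [NumberField K]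
    [Field L] [NumberField L] {k l : ℕ}
    (A : 𝓞 K →+ 𝓞 L)
    (f : ↥(admissibleSets K k) → ↥(admissibleSets L l))
    (hfcont : Continuous f)
    (hint : ∀ (t : 𝓞 K) (X Y : ↥(admissibleSets K k)),
      (Y : Set (𝓞 K)) = (t + ·) '' (X : Set (𝓞 K)) →
      ((f Y : Set (𝓞 L))) = (A t + ·) '' ((f X : Set (𝓞 L)))) :
    ∃ B : Finset (𝓞 K), ∀ (t : 𝓞 K) (X X' : ↥(admissibleSets K k)),
      (∀ b ∈ B, t + b ∈ (X : Set (𝓞 K)) ↔ t + b ∈ (X' : Set (𝓞 K))) →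
      (A t ∈ (f X : Set (𝓞 L)) ↔ A t ∈ (f X' : Set (𝓞 L))) := by
  obtain ⟨B, hB⟩ := fsr_block0 f hfcont
  refine ⟨B, fun t X X' h => ?_⟩
  have key : ∀ X : ↥(admissibleSets K k), (A t ∈ (f X : Set (𝓞 L)) ↔
      (0 : 𝓞 L) ∈ (f ⟨_, fsr_adm_translate X.2 (-t)⟩ : Set (𝓞 L))) := by
    intro X
    rw [hint (-t) X ⟨_, fsr_adm_translate X.2 (-t)⟩ rfl]
    simp
  rw [key X, key X']
  apply hB
  intro b hb
  have := h b hb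
  simpa [Set.mem_image, neg_add_eq_iff_eq_add] using this

lemma fsr_singleton_adm (L : Type*) [Field L] [NumberField L] (l : ℕ) (hl : 1 ≤ l) :
    ({0} : Set (𝓞 L)) ∈ admissibleSets L l := by
  intro P hP h0
  refine ⟨-1, ?_⟩
  rintro y rfl h
  apply hP.ne_top
  rw [Ideal.eq_top_iff_one]
  have := Ideal.pow_le_self (by omega : l ≠ 0) h
  simpa using this

lemma fsr_setup {K L : Type*} [Field K] [NumberField K]
    [Field L] [NumberField L] {k l : ℕ} (hl : 1 ≤ l)
    (A : 𝓞 K →+ 𝓞 L) (hAsurj : Function.Surjective A)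
    (f : ↥(admissibleSets K k) → ↥(admissibleSets L l))
    (hfcont : Continuous f) (hfsurj : Function.Surjective f)
    (hint : ∀ (t : 𝓞 K) (X Y : ↥(admissibleSets K k)),
      (Y : Set (𝓞 K)) = (t + ·) '' (X : Set (𝓞 K)) →
      ((f Y : Set (𝓞 L))) = (A t + ·) '' ((f X : Set (𝓞 L)))) :
    ∃ B Z : Finset (𝓞 K), (Z : Set (𝓞 K)) ∈ admissibleSets K k ∧
      (∀ (t : 𝓞 K) (X X' : ↥(admissibleSets K k)),
        (∀ b ∈ B, t + b ∈ (X : Set (𝓞 K)) ↔ t + b ∈ (X' : Set (𝓞 K))) →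
        (A t ∈ (f X : Set (𝓞 L)) ↔ A t ∈ (f X' : Set (𝓞 L)))) ∧
      (∀ (t : 𝓞 K) (X : ↥(admissibleSets K k)),
        (X : Set (𝓞 K)) = (t + ·) '' (Z : Set (𝓞 K)) → A t ∈ (f X : Set (𝓞 L))) ∧
      Function.Injective A := by
  classical
  obtain ⟨B, hB⟩ := fsr_block A f hfcont hint
  obtain ⟨X0, hX0⟩ := hfsurj ⟨{0}, fsr_singleton_adm L l hl⟩
  have h0 : A 0 ∈ (f X0 : Set (𝓞 L)) := by rw [hX0]; simp
  set Z : Finset (𝓞 K) := B.filter (fun b => b ∈ (X0 : Set (𝓞 K))) with hZ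
  have hZadm : (Z : Set (𝓞 K)) ∈ admissibleSets K k :=
    fsr_adm_subset X0.2 (by intro z hz; simp [hZ] at hz; exact hz.2)
  have hZ0 : A 0 ∈ (f ⟨Z, hZadm⟩ : Set (𝓞 L)) := by
    rw [← hB 0 X0 ⟨Z, hZadm⟩]
    · exact h0
    · intro b hb; simp [hZ, hb]
  have hZt : ∀ (t : 𝓞 K) (X : ↥(admissibleSets K k)),
        (X : Set (𝓞 K)) = (t + ·) '' (Z : Set (𝓞 K)) → A t ∈ (f X : Set (𝓞 L)) := by
    intro t X hX
    rw [hint t ⟨Z, hZadm⟩ X hX]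
    exact ⟨A 0, hZ0, by simp⟩
  have hemp : (∅ : Set (𝓞 K)) ∈ admissibleSets K k := fsr_adm_subset hZadm (Set.empty_subset _)
  have hfe : (f ⟨∅, hemp⟩ : Set (𝓞 L)) = ∅ := by
    by_contra hne
    obtain ⟨y, hy⟩ := Set.nonempty_iff_ne_empty.2 hne
    obtain ⟨M, hM⟩ := Ideal.exists_maximal (𝓞 L)
    obtain ⟨c, hc⟩ := (f ⟨∅, hemp⟩).2 M hM.isPrime
      (Ring.ne_bot_of_isMaximal_of_not_isField hM (RingOfIntegers.not_isField L))
    obtain ⟨t, ht⟩ := hAsurj (c - y)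
    have h1 := hint t ⟨∅, hemp⟩ ⟨∅, hemp⟩ (by simp)
    have : c ∈ (f ⟨∅, hemp⟩ : Set (𝓞 L)) := by
      rw [h1]; exact ⟨y, hy, by simp [ht]⟩
    exact hc c this (by simp)
  refine ⟨B, Z, hZadm, hB, hZt, ?_⟩
  rw [injective_iff_map_eq_zero]
  intro t ht
  by_contra hne
  -- find n with (n t + Z) disjoint from B
  have hinj : Function.Injective (fun n : ℕ => (n : 𝓞 K) * t) := by
    intro a b h
    simpa [hne] using h
  obtain ⟨n, hn⟩ := ((Finset.image₂ (· - ·) B Z).finite_toSet.preimage hinj.injOn).exists_notMem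
  let X : ↥(admissibleSets K k) := ⟨_, fsr_adm_translate hZadm ((n : 𝓞 K) * t)⟩
  have hAn : A ((n : 𝓞 K) * t) = 0 := by
    rw [← nsmul_eq_mul, map_nsmul, ht, smul_zero]
  have h2 : A ((n : 𝓞 K) * t) ∈ (f X : Set (𝓞 L)) := hZt _ X rfl
  rw [hAn, ← map_zero A, hB 0 X ⟨∅, hemp⟩, hfe] at h2
  · exact h2
  · intro b hb
    simp only [zero_add, Set.mem_empty_iff_false, iff_false]
    rintro ⟨z, hz, hzb⟩
    apply hn
    simp only [Set.mem_preimage, Finset.coe_image₂]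
    exact ⟨b, hb, z, hz, by simp only at hzb ⊢; rw [← hzb]; ring⟩

/-- separating shifts -/
lemma fsr_separate {R : Type*} [CommRing R] [IsDomain R] [CharZero R] {ι : Type*} [Finite ι]
    (x : ι → R) (N : R) (hN : N ≠ 0) (F : Finset R) :
    ∃ s : ι → R, ∀ i j, i ≠ j → (x j + N * s j) - (x i + N * s i) ∉ F := by
  classical
  obtain ⟨n, ⟨e⟩⟩ := Finite.exists_equiv_fin ι
  have hfin : (⋃ p : ι × ι, ⋃ (_ : p.1 ≠ p.2),
      (fun C : ℕ => (x p.2 + N * (C * (e p.2 : ℕ))) - (x p.1 + N * (C * (e p.1 : ℕ)))) ⁻¹'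
        (F : Set R)).Finite := by
    refine Set.finite_iUnion fun p => Set.finite_iUnion fun hp => ?_
    refine F.finite_toSet.preimage (Function.Injective.injOn ?_)
    intro a b hab
    simp only at hab
    have hne : ((e p.2 : ℕ) : R) - ((e p.1 : ℕ) : R) ≠ 0 := by
      intro h
      rw [sub_eq_zero, Nat.cast_inj, Fin.val_inj] at h
      exact hp (e.injective h).symm
    have : N * (((e p.2 : ℕ) : R) - ((e p.1 : ℕ) : R)) * ((a : R) - b) = 0 := by
      linear_combination hab
    simp only [mul_eq_zero, hN, hne, false_or, sub_eq_zero, Nat.cast_inj] at this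
    exact this
  obtain ⟨C, hC⟩ := hfin.exists_notMem
  refine ⟨fun i => C * (e i : ℕ), fun i j hij h => hC ?_⟩
  simp only [Set.mem_iUnion]
  exact ⟨(i, j), hij, h⟩

lemma fsr_misses {K : Type*} [Field K] [NumberField K] {k : ℕ} (P : HeightOneSpectrum (𝓞 K))
    (X : Finset (𝓞 K)) (h : X.card < Ideal.absNorm P.asIdeal ^ k) :
    ∃ c : 𝓞 K, ∀ y ∈ X, y - c ∉ P.asIdeal ^ k := by
  classical
  by_contra! hc
  have := fsr_finite_quot P.ne_bot k
  have : Fintype (𝓞 K ⧸ P.asIdeal ^ k) := Fintype.ofFinite _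
  have hs : Finset.univ ⊆ X.image (Ideal.Quotient.mk (P.asIdeal ^ k)) := by
    intro c _
    obtain ⟨c, rfl⟩ := Ideal.Quotient.mk_surjective c
    obtain ⟨y, hy, hyc⟩ := hc c
    exact Finset.mem_image.2 ⟨y, hy, Ideal.Quotient.eq.2 hyc⟩
  have h2 := (Finset.card_le_card hs).trans Finset.card_image_le
  rw [Finset.card_univ, ← Nat.card_eq_fintype_card, fsr_card_quot] at h2
  omega

/-- Step 2. -/
lemma fsr_cover {K L : Type*} [Field K] [NumberField K]
    [Field L] [NumberField L] {k l : ℕ} (hk : 1 ≤ k)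
    (A : 𝓞 K →+ 𝓞 L)
    (f : ↥(admissibleSets K k) → ↥(admissibleSets L l))
    (B Z : Finset (𝓞 K)) (hZ : (Z : Set (𝓞 K)) ∈ admissibleSets K k)
    (hB : ∀ (t : 𝓞 K) (X X' : ↥(admissibleSets K k)),
        (∀ b ∈ B, t + b ∈ (X : Set (𝓞 K)) ↔ t + b ∈ (X' : Set (𝓞 K))) →
        (A t ∈ (f X : Set (𝓞 L)) ↔ A t ∈ (f X' : Set (𝓞 L))))
    (hZt : ∀ (t : 𝓞 K) (X : ↥(admissibleSets K k)),
        (X : Set (𝓞 K)) = (t + ·) '' (Z : Set (𝓞 K)) → A t ∈ (f X : Set (𝓞 L)))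
    (Q : HeightOneSpectrum (𝓞 L)) (q : ℕ) (hq : q.Prime) (hqQ : (q : 𝓞 L) ∈ Q.asIdeal) :
    ∃ d : 𝓞 L, ∀ t : 𝓞 K, A t - d ∈ Q.asIdeal ^ l →
      ∃ P : HeightOneSpectrum (𝓞 K), (q : 𝓞 K) ∈ P.asIdeal ∧ ∃ z ∈ Z, t + z ∈ P.asIdeal ^ k := by
  classical
  by_contra! hcon
  have := fsr_finite_quot Q.ne_bot l
  have : Fintype (𝓞 L ⧸ Q.asIdeal ^ l) := Fintype.ofFinite _
  have h1 : ∀ d : 𝓞 L ⧸ Q.asIdeal ^ l, ∃ t : 𝓞 K, Ideal.Quotient.mk (Q.asIdeal ^ l) (A t) = d ∧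
      ∀ P : HeightOneSpectrum (𝓞 K), (q : 𝓞 K) ∈ P.asIdeal → ∀ z ∈ Z, t + z ∉ P.asIdeal ^ k := by
    intro d
    obtain ⟨d, rfl⟩ := Ideal.Quotient.mk_surjective d
    obtain ⟨t, ht, h⟩ := hcon d
    exact ⟨t, Ideal.Quotient.eq.2 ht, h⟩
  choose t ht htP using h1
  set N := Fintype.card (𝓞 L ⧸ Q.asIdeal ^ l) with hN
  -- small primes
  have hfin := fsr_finite_norm_le K (Z.card * N)
  set S := hfin.toFinset.filter (fun P => (q : 𝓞 K) ∉ P.asIdeal) with hS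
  set m : ℕ := ∏ P ∈ S, Ideal.absNorm P.asIdeal ^ k with hm
  have hcop : Nat.Coprime (q ^ (k + l)) m := by
    apply Nat.Coprime.pow_left
    rw [hm]
    apply Nat.Coprime.prod_right
    intro P hP
    apply Nat.Coprime.pow_right
    rw [hS, Finset.mem_filter] at hP
    obtain ⟨p, hp, hpP⟩ := fsr_prime_under P.asIdeal P.isPrime P.ne_bot
    have hne : q ≠ p := by rintro rfl; exact hP.2 hpP
    exact Nat.Coprime.coprime_dvd_right (fsr_absNorm_dvd hpP)
      (Nat.Coprime.pow_right _ ((Nat.coprime_primes hq hp).2 hne))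
  have hm0 : m ≠ 0 := by
    rw [hm, Finset.prod_ne_zero_iff]
    intro P _
    have := fsr_two_le_absNorm P
    positivity
  obtain ⟨e, he1, he0⟩ := Nat.chineseRemainder hcop 1 0
  obtain ⟨u, hu⟩ : ∃ u : ℤ, (e : ℤ) - 1 = (q : ℤ) ^ (k + l) * u := by
    have := (Nat.modEq_iff_dvd.1 he1.symm)
    push_cast at this
    exact this
  obtain ⟨v, hv⟩ : m ∣ e := (Nat.modEq_zero_iff_dvd).1 he0
  obtain ⟨s, hs⟩ := fsr_separate (fun d => (e : 𝓞 K) * t d) ((q : 𝓞 K) ^ (k + l) * m)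
    (mul_ne_zero (pow_ne_zero _ (by exact_mod_cast hq.ne_zero)) (by exact_mod_cast hm0))
    (Finset.image₂ (· - ·) B Z)
  set t' : (𝓞 L ⧸ Q.asIdeal ^ l) → 𝓞 K :=
    fun d => (e : 𝓞 K) * t d + (q : 𝓞 K) ^ (k + l) * m * s d with ht'
  have hu' : (e : 𝓞 K) = 1 + (q : 𝓞 K) ^ (k + l) * u := by
    have := congrArg (Int.cast : ℤ → 𝓞 K) hu
    push_cast at this
    linear_combination this
  have hcong : ∀ d, t' d = t d + (q ^ (k + l) : ℕ) • (u * t d + m * s d) := by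
    intro d
    simp only [ht', hu', nsmul_eq_mul]; push_cast; ring
  have hmv : ∀ d, t' d = m * (v * t d + (q : 𝓞 K) ^ (k + l) * s d) := by
    intro d
    have : (e : 𝓞 K) = m * v := by exact_mod_cast hv
    simp only [ht', this]; ring
  set W : Finset (𝓞 K) := Finset.image₂ (fun d z => t' d + z) Finset.univ Z with hW
  have hWadm : (W : Set (𝓞 K)) ∈ admissibleSets K k := by
    intro P' hP' h0'
    set P : HeightOneSpectrum (𝓞 K) := ⟨P', hP', h0'⟩ with hP
    change ∃ c, ∀ y ∈ (W : Set (𝓞 K)), y - c ∉ P.asIdeal ^ k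
    by_cases hqP : (q : 𝓞 K) ∈ P.asIdeal
    · refine ⟨0, fun y hy hyP => ?_⟩
      simp only [hW, Finset.coe_image₂, Set.mem_image2] at hy
      obtain ⟨d, -, z, hz, rfl⟩ := hy
      apply htP d P hqP z hz
      have h3 : (q : 𝓞 K) ^ (k + l) ∈ P.asIdeal ^ k := by
        rw [pow_add]; exact Ideal.mul_mem_right _ _ (Ideal.pow_mem_pow hqP k)
      have h4 : t d + z = (t' d + z - 0) - (q : 𝓞 K) ^ (k + l) * (u * t d + m * s d) := by
        rw [hcong d, nsmul_eq_mul]; push_cast; ring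
      rw [h4]
      exact sub_mem hyP (Ideal.mul_mem_right _ _ h3)
    · by_cases hPS : Ideal.absNorm P.asIdeal ≤ Z.card * N
      · have hPS' : P ∈ S := by
          rw [hS, Finset.mem_filter]; exact ⟨hfin.mem_toFinset.2 hPS, hqP⟩
        have hmP : (m : 𝓞 K) ∈ P.asIdeal ^ k := by
          rw [hm, ← Finset.mul_prod_erase _ _ hPS']
          push_cast
          exact Ideal.mul_mem_right _ _ (Ideal.pow_mem_pow (Ideal.absNorm_mem _) k)
        obtain ⟨c, hc⟩ := hZ P' hP' h0'
        refine ⟨c, fun y hy hyP => ?_⟩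
        simp only [hW, Finset.coe_image₂, Set.mem_image2] at hy
        obtain ⟨d, -, z, hz, rfl⟩ := hy
        apply hc z hz
        have h4 : z - c = (t' d + z - c) - m * (v * t d + (q : 𝓞 K) ^ (k + l) * s d) := by
          rw [hmv d]; ring
        rw [h4]
        exact sub_mem hyP (Ideal.mul_mem_right _ _ hmP)
      · refine fsr_misses P W ?_
        have h5 : W.card ≤ N * Z.card := by
          rw [hW, hN, ← Finset.card_univ]
          exact Finset.card_image₂_le _ _ _
        have h6 : Ideal.absNorm P.asIdeal ≤ Ideal.absNorm P.asIdeal ^ k :=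
          Nat.le_self_pow (by omega) _
        rw [mul_comm] at h5
        omega
  obtain ⟨c, hc⟩ := (f ⟨W, hWadm⟩).2 Q.asIdeal Q.isPrime Q.ne_bot
  set d := Ideal.Quotient.mk (Q.asIdeal ^ l) c with hd
  refine hc (A (t' d)) ?_ ?_
  · rw [hB (t' d) ⟨W, hWadm⟩ ⟨_, fsr_adm_translate hZ (t' d)⟩]
    · exact hZt _ _ rfl
    · intro b hb
      simp only [hW, Finset.coe_image₂, Set.mem_image2, Set.mem_image]
      constructor
      · rintro ⟨d', -, z, hz, hbz⟩
        by_cases hdd : d = d'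
        · exact ⟨z, hz, by rw [hdd] at hbz ⊢; exact hbz⟩
        · exfalso
          apply hs d d' hdd
          rw [Finset.mem_image₂]
          refine ⟨b, hb, z, hz, ?_⟩
          simp only [ht'] at hbz
          linear_combination -hbz
      · rintro ⟨z, hz, hbz⟩
        exact ⟨d, by simp, z, hz, hbz⟩
  · rw [← Ideal.Quotient.eq, ← hd]
    refine Eq.trans ?_ (ht d)
    rw [Ideal.Quotient.eq, hcong d, map_add, map_nsmul, add_sub_cancel_left, nsmul_eq_mul]
    apply Ideal.mul_mem_right
    push_cast
    rw [pow_add]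
    exact Ideal.mul_mem_left _ _ (Ideal.pow_mem_pow hqQ l)

/-- Step 3. -/
lemma fsr_incl {K L : Type*} [Field K] [NumberField K]
    [Field L] [NumberField L] {k l : ℕ}
    (A : 𝓞 K →+ 𝓞 L) (hAsurj : Function.Surjective A) (Z : Finset (𝓞 K))
    (Q : HeightOneSpectrum (𝓞 L)) (q : ℕ) (hq : q.Prime)
    (hlarge : Module.finrank ℚ K * Z.card < q)
    (hcov : ∃ d : 𝓞 L, ∀ t : 𝓞 K, A t - d ∈ Q.asIdeal ^ l →
      ∃ P : HeightOneSpectrum (𝓞 K), (q : 𝓞 K) ∈ P.asIdeal ∧ ∃ z ∈ Z, t + z ∈ P.asIdeal ^ k) :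
    ∃ P : HeightOneSpectrum (𝓞 K), (q : 𝓞 K) ∈ P.asIdeal ∧
      ∀ x : 𝓞 K, A x ∈ Q.asIdeal ^ l → x ∈ P.asIdeal ^ k := by
  classical
  obtain ⟨d, hd⟩ := hcov
  obtain ⟨t0, rfl⟩ := hAsurj d
  set H : AddSubgroup (𝓞 K) := (Submodule.toAddSubgroup (Q.asIdeal ^ l)).comap A with hH
  have hfin : {P : HeightOneSpectrum (𝓞 K) | (q : 𝓞 K) ∈ P.asIdeal}.Finite :=
    (fsr_finite_norm_le K (q ^ Module.finrank ℚ K)).subset fun P hP =>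
      Nat.le_of_dvd (pow_pos hq.pos _) (fsr_absNorm_dvd hP)
  set T := hfin.toFinset with hT
  have hTmem : ∀ P, P ∈ T ↔ (q : 𝓞 K) ∈ P.asIdeal := fun P => by simp [hT]
  have hg : ∀ i : HeightOneSpectrum (𝓞 K) × 𝓞 K, ∃ g : H,
      (∃ h : H, t0 + h + i.2 ∈ i.1.asIdeal ^ k) → t0 + g + i.2 ∈ i.1.asIdeal ^ k := by
    intro i
    by_cases h : ∃ h : H, t0 + h + i.2 ∈ i.1.asIdeal ^ k
    · obtain ⟨g, hg⟩ := h
      exact ⟨g, fun _ => hg⟩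
    · exact ⟨0, fun h' => absurd h' h⟩
  choose g hg using hg
  obtain ⟨i, hi, hfi, hindex⟩ := AddSubgroup.exists_index_le_card_of_leftCoset_cover
    (H := fun i : HeightOneSpectrum (𝓞 K) × 𝓞 K =>
      (Submodule.toAddSubgroup (i.1.asIdeal ^ k)).addSubgroupOf H) (g := g) (s := T ×ˢ Z) (by
    rw [Set.eq_univ_iff_forall]
    intro h
    obtain ⟨P, hP, z, hz, hmem⟩ := hd (t0 + h) (by
      rw [map_add, add_sub_cancel_left]; exact h.2)
    simp only [Set.mem_iUnion]
    refine ⟨(P, z), Finset.mem_product.2 ⟨(hTmem P).2 hP, hz⟩, ?_⟩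
    rw [Set.mem_vadd_set_iff_neg_vadd_mem]
    have h1 := hg (P, z) ⟨h, hmem⟩
    simp only [SetLike.mem_coe, AddSubgroup.mem_addSubgroupOf, Submodule.mem_toAddSubgroup]
    have h2 := sub_mem hmem h1
    convert h2 using 1
    simp; ring)
  have hiT : (q : 𝓞 K) ∈ i.1.asIdeal := (hTmem _).1 (Finset.mem_product.1 hi).1
  refine ⟨i.1, hiT, ?_⟩
  have hcard : (T ×ˢ Z).card < q := by
    rw [Finset.card_product]
    refine lt_of_le_of_lt ?_ hlarge
    gcongr
    exact fsr_card_over hq T fun P hP => (hTmem P).1 hP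
  have hdvd : ((Submodule.toAddSubgroup (i.1.asIdeal ^ k)).addSubgroupOf H).index ∣
      (q ^ Module.finrank ℚ K) ^ k := by
    have h1 : (Submodule.toAddSubgroup (i.1.asIdeal ^ k)).relIndex H ∣
      (Submodule.toAddSubgroup (i.1.asIdeal ^ k)).index := AddSubgroup.relIndex_dvd_index_of_normal _ _
    have h2 : (Submodule.toAddSubgroup (i.1.asIdeal ^ k)).index = Ideal.absNorm i.1.asIdeal ^ k :=
      fsr_card_quot i.1.asIdeal k
    rw [h2] at h1
    exact h1.trans (pow_dvd_pow_of_dvd (fsr_absNorm_dvd hiT) k)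
  rw [← pow_mul] at hdvd
  obtain ⟨j, -, hj⟩ := (Nat.dvd_prime_pow hq).1 hdvd
  have hj0 : j = 0 := by
    by_contra hne
    have := Nat.le_self_pow hne q
    omega
  rw [hj0, pow_zero, AddSubgroup.index_eq_one, AddSubgroup.addSubgroupOf_eq_top] at hj
  intro x hx
  exact hj hx

/-- Step 4 and 5 -/
lemma fsr_mult {K L : Type*} [Field K] [NumberField K]
    [Field L] [NumberField L] {k l : ℕ} (hk : 1 ≤ k) (hl : 1 ≤ l)
    (A : 𝓞 K →+ 𝓞 L) (hA : Function.Bijective A) (C : ℕ)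
    (hincl : ∀ (Q : HeightOneSpectrum (𝓞 L)) (q : ℕ), q.Prime → (q : 𝓞 L) ∈ Q.asIdeal → C < q →
      ∃ P : HeightOneSpectrum (𝓞 K), (q : 𝓞 K) ∈ P.asIdeal ∧
      ∀ x : 𝓞 K, A x ∈ Q.asIdeal ^ l → x ∈ P.asIdeal ^ k) :
    k ≤ l ∧ ∀ x y, A x * A y = A 1 * A (x * y) := by
  have main : ∀ N : ℕ, N ≠ 0 → k ≤ l ∧ ∃ Q : Ideal (𝓞 L), (N : 𝓞 L) ∉ Q ∧
      ∀ x y, A x * A y - A 1 * A (x * y) ∈ Q := by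
    intro N hN
    obtain ⟨Q', q, hQ, hQ0, hq, hqQ, hqQ2, hnQ, hdeg⟩ :=
      fsr_degree_one L (N * C.factorial) (mul_ne_zero hN C.factorial_ne_zero)
    have hCq : C < q := by
      by_contra! h
      apply hnQ
      push_cast
      apply Ideal.mul_mem_left
      obtain ⟨c, hc⟩ := (Nat.Prime.dvd_factorial hq).2 h
      rw [hc]; push_cast; exact Ideal.mul_mem_right _ _ hqQ
    obtain ⟨P, hqP, hPQ⟩ := hincl ⟨Q', hQ, hQ0⟩ q hq hqQ hCq
    simp only at hPQ
    have hPne := P.isPrime.ne_top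
    have hQne := hQ.ne_top
    have hnormQ : Ideal.absNorm Q' = q := by
      apply le_antisymm _ (fsr_le_absNorm hQne hq hqQ)
      have : Function.Surjective (fun n : Fin q => Ideal.Quotient.mk Q' (n : ℕ)) := by
        intro c
        obtain ⟨c, rfl⟩ := Ideal.Quotient.mk_surjective c
        obtain ⟨n, hn⟩ := hdeg c
        have hq0 : (q : ℤ) ≠ 0 := by exact_mod_cast hq.ne_zero
        have h0 := Int.emod_nonneg n hq0
        have h1 := Int.emod_lt_of_pos n (by exact_mod_cast hq.pos : (0 : ℤ) < q)
        refine ⟨⟨(n % q).toNat, by omega⟩, ?_⟩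
        simp only
        rw [Ideal.Quotient.eq]
        have h2 : (((n % q).toNat : ℕ) : 𝓞 L) = ((n % q : ℤ) : 𝓞 L) := by
          rw [← Int.cast_natCast, Int.toNat_of_nonneg h0]
        have h3 : (n : 𝓞 L) = ((n % q : ℤ) : 𝓞 L) + q * ((n / q : ℤ) : 𝓞 L) := by
          exact_mod_cast (congrArg (Int.cast : ℤ → 𝓞 L) (Int.emod_add_mul_ediv n q)).symm
        rw [h2]
        have : ((n % q : ℤ) : 𝓞 L) - c = -(c - n) - q * ((n / q : ℤ) : 𝓞 L) := by
          linear_combination -h3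
        rw [this]
        exact sub_mem (neg_mem hn) (Ideal.mul_mem_right _ _ hqQ)
      have := Nat.card_le_card_of_surjective _ this
      rw [Nat.card_fin] at this
      rw [Ideal.absNorm_apply, Submodule.cardQuot_apply]
      exact this
    refine ⟨?_, Q', ?_, ?_⟩
    · have h1 : (Submodule.toAddSubgroup (P.asIdeal ^ k)).index ∣
          ((Submodule.toAddSubgroup (Q' ^ l)).comap A).index :=
        AddSubgroup.index_dvd_of_le (fun x hx => hPQ x hx)
      rw [AddSubgroup.index_comap_of_surjective _ hA.2] at h1
      have h2 : (Submodule.toAddSubgroup (P.asIdeal ^ k)).index = Ideal.absNorm P.asIdeal ^ k :=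
        fsr_card_quot _ k
      have h3 : (Submodule.toAddSubgroup (Q' ^ l)).index = Ideal.absNorm Q' ^ l :=
        fsr_card_quot _ l
      rw [h2, h3, hnormQ] at h1
      have h4 := Nat.le_of_dvd (pow_pos hq.pos _) h1
      have h5 : q ^ k ≤ q ^ l := (Nat.pow_le_pow_left (fsr_le_absNorm hPne hq hqP) k).trans h4
      exact (Nat.pow_le_pow_iff_right hq.one_lt).1 h5
    · intro h
      apply hnQ
      push_cast
      exact Ideal.mul_mem_right _ _ h
    · have hPQ1 : ∀ x, A x ∈ Q' → x ∈ P.asIdeal := by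
        intro x hx
        have := fsr_le_sup hQ hQ0 hqQ hqQ2 hl hx
        obtain ⟨a, ha, b, hb, hab⟩ := Submodule.mem_sup.1 this
        obtain ⟨c, rfl⟩ := Ideal.mem_span_singleton'.1 hb
        obtain ⟨a, rfl⟩ := hA.2 a
        obtain ⟨c, rfl⟩ := hA.2 c
        have : x = a + q * c := by
          apply hA.1
          rw [← hab, map_add, ← nsmul_eq_mul, map_nsmul, nsmul_eq_mul, mul_comm]
        rw [this]
        exact add_mem (Ideal.pow_le_self (by omega) (hPQ a ha)) (Ideal.mul_mem_right _ _ hqP)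
      obtain ⟨m, hm⟩ := hdeg (A 1)
      have hqm : ¬ (q : ℤ) ∣ m := by
        rintro ⟨c, rfl⟩
        apply hPne
        rw [Ideal.eq_top_iff_one]
        apply hPQ1
        have : A 1 = (A 1 - ((q * c : ℤ) : 𝓞 L)) + q * c := by push_cast; ring
        rw [this]
        exact add_mem hm (Ideal.mul_mem_right _ _ hqQ)
      obtain ⟨u, m', hum⟩ := (Prime.coprime_iff_not_dvd (Nat.prime_iff_prime_int.1 hq)).2 hqm
      have hum' : (u : 𝓞 L) * q + m' * m = 1 := by exact_mod_cast congrArg (Int.cast : ℤ → 𝓞 L) hum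
      have ha : ∀ x, ∃ a : ℤ, A x - a * A 1 ∈ Q' ∧ x - a ∈ P.asIdeal := by
        intro x
        obtain ⟨n, hn⟩ := hdeg (A x)
        have h1 : A x - ((n * m' : ℤ) : 𝓞 L) * A 1 ∈ Q' := by
          have : A x - ((n * m' : ℤ) : 𝓞 L) * A 1 =
              (A x - n) - n * m' * (A 1 - m) + (n * u) * q := by
            push_cast; linear_combination (-(n : 𝓞 L)) * hum'
          rw [this]
          exact add_mem (sub_mem hn (Ideal.mul_mem_left _ _ hm)) (Ideal.mul_mem_left _ _ hqQ)
        refine ⟨n * m', h1, hPQ1 _ ?_⟩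
        have : A (((n * m' : ℤ)) : 𝓞 K) = ((n * m' : ℤ) : 𝓞 L) * A 1 := by
          rw [← zsmul_one, map_zsmul, zsmul_eq_mul]
        rw [map_sub, this]; exact h1
      intro x y
      obtain ⟨a, ha1, ha2⟩ := ha x
      obtain ⟨b, hb1, hb2⟩ := ha y
      obtain ⟨c, hc1, hc2⟩ := ha (x * y)
      have hdvd : (q : ℤ) ∣ a * b - c := by
        apply fsr_coprime_notMem hPne hqP _ hq
        have : ((a * b - c : ℤ) : 𝓞 K) = (x * y - c) - (y * (x - a) + a * (y - b)) := by
          push_cast; ring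
        rw [this]
        exact sub_mem hc2 (add_mem (Ideal.mul_mem_left _ _ ha2) (Ideal.mul_mem_left _ _ hb2))
      obtain ⟨e, he⟩ := hdvd
      have he' : (a : 𝓞 L) * b - c = q * e := by exact_mod_cast congrArg (Int.cast : ℤ → 𝓞 L) he
      have : A x * A y - A 1 * A (x * y) = A y * (A x - a * A 1) + a * A 1 * (A y - b * A 1)
          - A 1 * (A (x * y) - c * A 1) + (A 1 ^ 2 * e) * q := by
        linear_combination (A 1 ^ 2) * he'
      rw [this]
      exact add_mem (sub_mem (add_mem (Ideal.mul_mem_left _ _ ha1) (Ideal.mul_mem_left _ _ hb1))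
        (Ideal.mul_mem_left _ _ hc1)) (Ideal.mul_mem_left _ _ hqQ)
  refine ⟨(main 1 one_ne_zero).1, fun x y => ?_⟩
  by_contra hne
  set w := A x * A y - A 1 * A (x * y) with hw
  have hw0 : w ≠ 0 := sub_ne_zero.2 hne
  obtain ⟨-, Q, hNQ, hQ⟩ := main (Ideal.absNorm (Ideal.span {w})) (by
    rw [Ne, Ideal.absNorm_eq_zero_iff, Ideal.span_singleton_eq_bot]; exact hw0)
  apply hNQ
  exact (Ideal.span_singleton_le_iff_mem _).2 (hQ x y) (Ideal.absNorm_mem _)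

lemma fsr_iso {K L : Type*} [Field K] [NumberField K]
    [Field L] [NumberField L] (A : 𝓞 K →+ 𝓞 L) (hA : Function.Bijective A)
    (hmul : ∀ x y, A x * A y = A 1 * A (x * y)) : Nonempty (K ≃+* L) := by
  have h1 : ((A 1 : 𝓞 L) : L) ≠ 0 := by
    rw [RingOfIntegers.coe_ne_zero_iff]
    intro h
    exact one_ne_zero (hA.1 (h.trans (map_zero A).symm))
  let φ : 𝓞 K →+* L :=
    { toFun := fun x => (A x : L) / (A 1 : L)
      map_one' := div_self h1
      map_zero' := by simp
      map_add' := fun x y => by simp [add_div]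
      map_mul' := fun x y => by
        have := congrArg (fun z : 𝓞 L => (z : L)) (hmul x y)
        simp only [map_mul] at this
        field_simp
        linear_combination -this }
  have hφ : Function.Injective φ := by
    intro x y h
    have h' : (A x : L) / (A 1 : L) = (A y : L) / (A 1 : L) := h
    rw [div_left_inj' h1] at h'
    exact hA.1 (RingOfIntegers.coe_injective h')
  let Φ : K →+* L := IsFractionRing.lift hφ
  refine ⟨RingEquiv.ofBijective Φ ⟨Φ.injective, fun y => ?_⟩⟩
  obtain ⟨a, b, hb, rfl⟩ := IsFractionRing.div_surjective (A := 𝓞 L) y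
  obtain ⟨a, rfl⟩ := hA.2 a
  obtain ⟨b, rfl⟩ := hA.2 b
  refine ⟨(a : K) / (b : K), ?_⟩
  have hΦ : ∀ x : 𝓞 K, Φ (x : K) = (A x : L) / (A 1 : L) := fun x =>
    IsFractionRing.lift_algebraMap hφ x
  rw [map_div₀, hΦ, hΦ, div_div_div_cancel_right₀ h1]

lemma fsr_count {ι : Type*} [Fintype ι] [DecidableEq ι] (R : ι → Type*) [∀ i, Fintype (R i)]
    [∀ i, DecidableEq (R i)] (a : ∀ i, R i) :
    (Finset.univ.filter (fun c : ∀ i, R i => ∀ i, c i ≠ a i)).card =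
      ∏ i, (Fintype.card (R i) - 1) := by
  have : Finset.univ.filter (fun c : ∀ i, R i => ∀ i, c i ≠ a i) =
      Fintype.piFinset (fun i => Finset.univ.erase (a i)) := by
    ext c; simp [Fintype.mem_piFinset]
  rw [this, Fintype.card_piFinset]
  simp [Finset.card_erase_of_mem]

lemma fsr_ratio {K : Type*} [Field K] [NumberField K] (k : ℕ) (hk : 1 ≤ k)
    (S : Finset (HeightOneSpectrum (𝓞 K)))
    [∀ P : S, Fintype (𝓞 K ⧸ P.1.asIdeal ^ k)] :
    (((∏ P : S, (Fintype.card (𝓞 K ⧸ P.1.asIdeal ^ k) - 1) : ℕ)) : ℝ) =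
      (∏ P : S, Fintype.card (𝓞 K ⧸ P.1.asIdeal ^ k) : ℕ) *
      ∏ P ∈ S, (1 - ((Ideal.absNorm P.asIdeal : ℝ) ^ k)⁻¹) := by
  rw [← Finset.prod_coe_sort S]
  push_cast
  rw [← Finset.prod_mul_distrib]
  refine Finset.prod_congr rfl fun P _ => ?_
  rw [← Nat.card_eq_fintype_card, fsr_card_quot]
  have h2 := fsr_two_le_absNorm P.1
  have h1 : 1 ≤ Ideal.absNorm P.1.asIdeal ^ k := Nat.one_le_pow _ _ (by omega)
  have h0 : (Ideal.absNorm P.1.asIdeal : ℝ) ≠ 0 := by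
    have : Ideal.absNorm P.1.asIdeal ≠ 0 := by omega
    exact_mod_cast this
  rw [Nat.cast_sub h1]
  push_cast
  field_simp

lemma fsr_lower {L : Type*} [Field L] [NumberField L] {l : ℕ} (hl : 1 ≤ l) {δ : ℝ}
    (hδ : ∀ T : Finset (HeightOneSpectrum (𝓞 L)),
        δ ≤ ∏ P ∈ T, (1 - ((Ideal.absNorm P.asIdeal : ℝ) ^ l)⁻¹))
    (W : Finset (𝓞 L)) :
    ∃ Y ⊆ W, (Y : Set (𝓞 L)) ∈ admissibleSets L l ∧ δ * W.card ≤ Y.card := by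
  classical
  have hfin := fsr_finite_norm_le L W.card
  set T := hfin.toFinset with hT
  have (P : T) : Fintype (𝓞 L ⧸ P.1.asIdeal ^ l) :=
    @Fintype.ofFinite _ (fsr_finite_quot P.1.ne_bot l)
  let G := ∀ P : T, 𝓞 L ⧸ P.1.asIdeal ^ l
  let Y : G → Finset (𝓞 L) := fun c => W.filter
    (fun w => ∀ P : T, c P ≠ Ideal.Quotient.mk (P.1.asIdeal ^ l) w)
  have hsum : ∑ c : G, (Y c).card =
      W.card * ∏ P : T, (Fintype.card (𝓞 L ⧸ P.1.asIdeal ^ l) - 1) := by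
    simp only [Y, Finset.card_filter]
    rw [Finset.sum_comm]
    have : ∀ w ∈ W, (∑ c : G, if ∀ P : T, c P ≠ Ideal.Quotient.mk (P.1.asIdeal ^ l) w then 1 else 0)
        = ∏ P : T, (Fintype.card (𝓞 L ⧸ P.1.asIdeal ^ l) - 1) := by
      intro w _
      rw [← Finset.card_filter]
      exact fsr_count (fun P : T => 𝓞 L ⧸ P.1.asIdeal ^ l) _
    rw [Finset.sum_congr rfl this, Finset.sum_const, smul_eq_mul]
  have hGcard : Fintype.card G = ∏ P : T, Fintype.card (𝓞 L ⧸ P.1.asIdeal ^ l) :=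
    Fintype.card_pi
  have hGpos : (0 : ℝ) < Fintype.card G := by
    have : 0 < Fintype.card G := Fintype.card_pos_iff.2 ⟨fun _ => 0⟩
    exact_mod_cast this
  obtain ⟨c, hc⟩ : ∃ c : G, δ * W.card ≤ (Y c).card := by
    by_contra! hcon
    have h1 : ∑ c : G, ((Y c).card : ℝ) < ∑ c : G, δ * W.card :=
      Finset.sum_lt_sum_of_nonempty ⟨fun _ => 0, Finset.mem_univ _⟩ (fun c _ => hcon c)
    rw [Finset.sum_const, Finset.card_univ, nsmul_eq_mul] at h1
    have h2 : (∑ c : G, ((Y c).card : ℝ)) = W.card *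
        (Fintype.card G * ∏ P ∈ T, (1 - ((Ideal.absNorm P.asIdeal : ℝ) ^ l)⁻¹)) := by
      rw [hGcard, ← fsr_ratio l hl T]
      exact_mod_cast hsum
    rw [h2] at h1
    have h3 : δ * (Fintype.card G * W.card) ≤
        (∏ P ∈ T, (1 - ((Ideal.absNorm P.asIdeal : ℝ) ^ l)⁻¹)) * (Fintype.card G * W.card) :=
      mul_le_mul_of_nonneg_right (hδ T) (by positivity)
    linarith
  refine ⟨Y c, Finset.filter_subset _ _, ?_, hc⟩
  intro P' hP' h0'
  set P : HeightOneSpectrum (𝓞 L) := ⟨P', hP', h0'⟩ with hP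
  change ∃ d, ∀ y ∈ (Y c : Set (𝓞 L)), y - d ∉ P.asIdeal ^ l
  by_cases hPT : P ∈ T
  · obtain ⟨d, hd⟩ := Ideal.Quotient.mk_surjective (c ⟨P, hPT⟩)
    refine ⟨d, fun y hy hyd => ?_⟩
    have := (Finset.mem_filter.1 (Finset.mem_coe.1 hy)).2 ⟨P, hPT⟩
    exact this (hd.symm.trans (Ideal.Quotient.eq.2 hyd).symm)
  · obtain ⟨d, hd⟩ := fsr_misses (k := l) P (Y c) (by
      have h1 : ¬ Ideal.absNorm P.asIdeal ≤ W.card := by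
        intro h; exact hPT (by simpa [hT] using h)
      have h2 : (Y c).card ≤ W.card := Finset.card_filter_le _ _
      have h3 : Ideal.absNorm P.asIdeal ≤ Ideal.absNorm P.asIdeal ^ l :=
        Nat.le_self_pow (by omega) _
      omega)
    exact ⟨d, fun y hy => hd y hy⟩

/-- Upper density bound for sets missing a residue class modulo finitely many prime powers. -/
lemma fsr_upper {K : Type*} [Field K] [NumberField K] {k : ℕ} (hk : 1 ≤ k)
    (S : Finset (HeightOneSpectrum (𝓞 K))) :
    ∃ Tr : Finset (𝓞 K), ∀ (V U : Finset (𝓞 K)), (∀ v ∈ V, ∀ s ∈ Tr, v - s ∈ U) →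
      ∀ c : (∀ P : S, 𝓞 K ⧸ P.1.asIdeal ^ k), ∀ D : Finset (𝓞 K), D ⊆ V →
      (∀ v ∈ D, ∀ P : S, Ideal.Quotient.mk (P.1.asIdeal ^ k) v ≠ c P) →
      (D.card : ℝ) ≤ U.card * ∏ P ∈ S, (1 - ((Ideal.absNorm P.asIdeal : ℝ) ^ k)⁻¹) := by
  classical
  have (P : S) : Fintype (𝓞 K ⧸ P.1.asIdeal ^ k) :=
    @Fintype.ofFinite _ (fsr_finite_quot P.1.ne_bot k)
  let G := ∀ P : S, 𝓞 K ⧸ P.1.asIdeal ^ k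
  have hcop : Pairwise fun P P' : S => IsCoprime (P.1.asIdeal ^ k) (P'.1.asIdeal ^ k) := by
    intro P P' hne
    apply IsCoprime.pow
    rw [Ideal.isCoprime_iff_sup_eq]
    apply Ideal.IsMaximal.coprime_of_ne P.1.isMaximal P'.1.isMaximal
    intro h
    exact hne (Subtype.ext (HeightOneSpectrum.ext h))
  have hsurj : ∀ g : G, ∃ x : 𝓞 K, ∀ P : S, Ideal.Quotient.mk (P.1.asIdeal ^ k) x = g P := by
    intro g
    obtain ⟨x, hx⟩ := Ideal.pi_quotient_surjective hcop g
    exact ⟨x, hx⟩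
  choose s hs using hsurj
  refine ⟨Finset.univ.image s, fun V U hU c D hDV hD => ?_⟩
  have hGcard : Fintype.card G = ∏ P : S, Fintype.card (𝓞 K ⧸ P.1.asIdeal ^ k) :=
    Fintype.card_pi
  have hGpos : (0 : ℝ) < Fintype.card G := by
    have : 0 < Fintype.card G := Fintype.card_pos_iff.2 ⟨fun _ => 0⟩
    exact_mod_cast this
  have key : Fintype.card G * D.card ≤
      U.card * ∏ P : S, (Fintype.card (𝓞 K ⧸ P.1.asIdeal ^ k) - 1) := by
    have h1 : ((Finset.univ : Finset G) ×ˢ D).card ≤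
        (U.sigma (fun u => Finset.univ.filter
          (fun g : G => ∀ P : S, g P ≠ c P - Ideal.Quotient.mk (P.1.asIdeal ^ k) u))).card := by
      apply Finset.card_le_card_of_injOn (fun p => ⟨p.2 - s p.1, p.1⟩)
      · rintro ⟨g, v⟩ hp
        have hv : v ∈ D := (Finset.mem_product.1 (Finset.mem_coe.1 hp)).2
        simp only [Finset.coe_sigma, Set.mem_sigma_iff, Finset.mem_coe, Finset.mem_filter,
          Finset.mem_univ, true_and]
        refine ⟨hU v (hDV hv) _ (Finset.mem_image_of_mem _ (Finset.mem_univ _)), fun P h => ?_⟩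
        apply hD v hv P
        rw [map_sub, hs] at h
        linear_combination h
      · rintro ⟨g, v⟩ - ⟨g', v'⟩ - h
        simp only [Sigma.mk.injEq, heq_eq_eq] at h
        obtain ⟨h1, rfl⟩ := h
        simpa using h1
    rw [Finset.card_product, Finset.card_univ, Finset.card_sigma] at h1
    refine h1.trans (le_of_eq ?_)
    rw [Finset.sum_congr rfl (fun u _ => fsr_count (fun P : S => 𝓞 K ⧸ P.1.asIdeal ^ k)
      (fun P => c P - Ideal.Quotient.mk (P.1.asIdeal ^ k) u)), Finset.sum_const, smul_eq_mul]
  have key' : (Fintype.card G : ℝ) * D.card ≤ U.card *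
      (Fintype.card G * ∏ P ∈ S, (1 - ((Ideal.absNorm P.asIdeal : ℝ) ^ k)⁻¹)) := by
    rw [hGcard, ← fsr_ratio k hk S, ← hGcard]
    exact_mod_cast key
  refine le_of_mul_le_mul_left ?_ hGpos
  linarith

lemma fsr_folner (K : Type*) [Field K] [NumberField K] (E : Finset (𝓞 K)) (ε : ℝ) (hε : 0 < ε)
    (M0 : ℝ) : ∃ W U : Finset (𝓞 K), M0 ≤ W.card ∧ (∀ w ∈ W, ∀ e ∈ E, w + e ∈ U) ∧
      (U.card : ℝ) ≤ (1 + ε) * W.card := by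
  classical
  let b := RingOfIntegers.basis K
  set ι := Module.Free.ChooseBasisIndex ℤ (𝓞 K)
  have hne : 1 ≤ Fintype.card ι := by
    rw [← Module.finrank_eq_card_basis b, RingOfIntegers.rank]
    exact Module.finrank_pos
  let φ : 𝓞 K ≃ (ι → ℤ) := b.equivFun.toEquiv
  obtain ⟨R, hR⟩ : ∃ R : ℕ, ∀ e ∈ E, ∀ i, |b.equivFun e i| ≤ R := by
    refine ⟨∑ e ∈ E, ∑ i, (b.equivFun e i).natAbs, fun e he i => ?_⟩
    rw [Int.abs_eq_natAbs]
    have h1 := Finset.single_le_sum (f := fun i => (b.equivFun e i).natAbs)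
      (fun _ _ => Nat.zero_le _) (Finset.mem_univ i)
    have h2 := Finset.single_le_sum (f := fun e => ∑ i, (b.equivFun e i).natAbs)
      (fun _ _ => Nat.zero_le _) he
    exact_mod_cast h1.trans h2
  let box : ℤ → ℤ → Finset (𝓞 K) := fun x y =>
    (Fintype.piFinset (fun _ : ι => Finset.Ico x y)).map φ.symm.toEmbedding
  have hbox : ∀ x y z, z ∈ box x y ↔ ∀ i, x ≤ b.equivFun z i ∧ b.equivFun z i < y := by
    intro x y z
    simp only [box, Finset.mem_map_equiv, Equiv.symm_symm, Fintype.mem_piFinset, Finset.mem_Ico]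
    rfl
  have hcard : ∀ x y, (box x y).card = (y - x).toNat ^ Fintype.card ι := by
    intro x y
    simp [box]
  have hlim : Filter.Tendsto (fun M : ℕ => (1 + (2 * R : ℝ) / M) ^ Fintype.card ι) Filter.atTop
      (nhds ((1 + 0) ^ Fintype.card ι)) :=
    (tendsto_const_nhds.add (tendsto_const_div_atTop_nhds_zero_nat _)).pow _
  have hev := hlim.eventually (gt_mem_nhds (show (1 + 0 : ℝ) ^ Fintype.card ι < 1 + ε by simp [hε]))
  obtain ⟨M, hM1, hM2, hM3⟩ := (hev.and ((Filter.eventually_ge_atTop 1).and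
    (Filter.eventually_ge_atTop ⌈M0⌉₊))).exists
  refine ⟨box 0 M, box (-R) (M + R), ?_, ?_, ?_⟩
  · rw [hcard]
    have h1 : M ≤ M ^ Fintype.card ι := Nat.le_self_pow (by omega) _
    have : M0 ≤ (M : ℝ) := (Nat.le_ceil M0).trans (by exact_mod_cast hM3)
    simp only [sub_zero, Int.toNat_natCast]
    exact this.trans (by exact_mod_cast h1)
  · intro w hw e he
    rw [hbox] at hw ⊢
    intro i
    have h1 := hw i
    have h2 := abs_le.1 (hR e he i)
    simp only [map_add, Pi.add_apply]
    constructor <;> linarith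
  · rw [hcard, hcard]
    have h1 : ((M : ℤ) + R - -R).toNat = M + 2 * R := by omega
    have h2 : ((M : ℤ) - 0).toNat = M := by omega
    rw [h1, h2]
    push_cast
    have hM : (0 : ℝ) < M := by exact_mod_cast hM2
    have h3 : (M + 2 * R : ℝ) = (1 + 2 * R / M) * M := by field_simp
    rw [h3, mul_pow]
    exact mul_le_mul_of_nonneg_right hM1.le (by positivity)

lemma fsr_entropy {K L : Type*} [Field K] [NumberField K]
    [Field L] [NumberField L] {k l : ℕ} (hk : 1 ≤ k) (hl : 1 ≤ l)
    (A : 𝓞 K →+ 𝓞 L) (hA : Function.Injective A)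
    (f : ↥(admissibleSets K k) → ↥(admissibleSets L l)) (hfsurj : Function.Surjective f)
    (B : Finset (𝓞 K))
    (hB : ∀ (t : 𝓞 K) (X X' : ↥(admissibleSets K k)),
        (∀ b ∈ B, t + b ∈ (X : Set (𝓞 K)) ↔ t + b ∈ (X' : Set (𝓞 K))) →
        (A t ∈ (f X : Set (𝓞 L)) ↔ A t ∈ (f X' : Set (𝓞 L))))
    {δ : ℝ} (hδ : ∀ T : Finset (HeightOneSpectrum (𝓞 L)),
        δ ≤ ∏ P ∈ T, (1 - ((Ideal.absNorm P.asIdeal : ℝ) ^ l)⁻¹))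
    (S : Finset (HeightOneSpectrum (𝓞 K))) :
    δ ≤ ∏ P ∈ S, (1 - ((Ideal.absNorm P.asIdeal : ℝ) ^ k)⁻¹) := by
  classical
  by_contra! hlt
  set p := ∏ P ∈ S, (1 - ((Ideal.absNorm P.asIdeal : ℝ) ^ k)⁻¹) with hp
  have hfac : ∀ P ∈ S, 0 ≤ (1 - ((Ideal.absNorm P.asIdeal : ℝ) ^ k)⁻¹) := by
    intro P _
    have h2 : (1 : ℝ) ≤ Ideal.absNorm P.asIdeal := by
      have := fsr_two_le_absNorm P
      exact_mod_cast (by omega : 1 ≤ Ideal.absNorm P.asIdeal)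
    have := inv_le_one_of_one_le₀ (one_le_pow₀ h2 (n := k))
    linarith
  have hp0 : 0 ≤ p := Finset.prod_nonneg hfac
  have hp1 : p ≤ 1 := Finset.prod_le_one hfac (fun P _ => by
    have : (0 : ℝ) ≤ ((Ideal.absNorm P.asIdeal : ℝ) ^ k)⁻¹ := by positivity
    linarith)
  have (P : S) : Fintype (𝓞 K ⧸ P.1.asIdeal ^ k) :=
    @Fintype.ofFinite _ (fsr_finite_quot P.1.ne_bot k)
  let G := ∀ P : S, 𝓞 K ⧸ P.1.asIdeal ^ k
  obtain ⟨Tr, hTr⟩ := fsr_upper hk S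
  set ε := (δ - p) / 2 with hε
  have hε0 : 0 < ε := by rw [hε]; linarith
  obtain ⟨W, U, hW, hU, hUW⟩ := fsr_folner K (Finset.image₂ (· - ·) B Tr) ε hε0
    (((Fintype.card G : ℝ) + 1) / ε)
  obtain ⟨Y, hYW, hYadm, hY⟩ := fsr_lower hl hδ (W.image A)
  rw [Finset.card_image_of_injective _ hA] at hY
  set V := Finset.image₂ (· + ·) W B with hV
  let D : G → Finset (𝓞 K) := fun c => V.filter
    (fun v => ∀ P : S, Ideal.Quotient.mk (P.1.asIdeal ^ k) v ≠ c P)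
  have hD : ∀ c : G, ((D c).card : ℝ) ≤ U.card * p := by
    intro c
    refine hTr V U ?_ c (D c) (Finset.filter_subset _ _) (fun v hv => (Finset.mem_filter.1 hv).2)
    intro v hv s hs
    obtain ⟨w, hw, b, hb, rfl⟩ := Finset.mem_image₂.1 hv
    rw [add_sub_assoc]
    exact hU w hw _ (Finset.mem_image₂.2 ⟨b, hb, s, hs, rfl⟩)
  set m := ⌊(U.card : ℝ) * p⌋₊ with hm
  have hDm : ∀ c : G, (D c).card ≤ m := fun c => Nat.le_floor (hD c)
  -- choose preimages
  have hpre : ∀ y : Finset (𝓞 L), y ⊆ Y → ∃ X : ↥(admissibleSets K k), (f X : Set (𝓞 L)) = y := by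
    intro y hy
    obtain ⟨X, hX⟩ := hfsurj ⟨(y : Set (𝓞 L)), fsr_adm_subset hYadm (by exact_mod_cast hy)⟩
    exact ⟨X, by rw [hX]⟩
  have hmiss : ∀ X : ↥(admissibleSets K k), ∃ c : G, ∀ v ∈ (X : Set (𝓞 K)), ∀ P : S,
      Ideal.Quotient.mk (P.1.asIdeal ^ k) v ≠ c P := by
    intro X
    have := fun P : S => X.2 P.1.asIdeal P.1.isPrime P.1.ne_bot
    choose c hc using this
    exact ⟨fun P => Ideal.Quotient.mk _ (c P), fun v hv P h => hc P v hv (Ideal.Quotient.eq.1 h)⟩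
  have : Nonempty ↥(admissibleSets K k) := ⟨(hpre Y subset_rfl).choose⟩
  choose! X hX using hpre
  choose c hc using hmiss
  have hcount : Y.powerset.card ≤
      ((Finset.univ : Finset G).sigma (fun g => (D g).powerset)).card := by
    apply Finset.card_le_card_of_injOn
      (fun y => ⟨c (X y), V.filter (fun v => v ∈ (X y : Set (𝓞 K)))⟩)
    · intro y hy
      simp only [Finset.coe_sigma, Set.mem_sigma_iff, Finset.mem_coe, Finset.mem_univ, true_and,
        Finset.mem_powerset]
      intro v hv
      obtain ⟨hv1, hv2⟩ := Finset.mem_filter.1 hv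
      exact Finset.mem_filter.2 ⟨hv1, hc _ v hv2⟩
    · intro y hy y' hy' h
      have hy := Finset.mem_powerset.1 (Finset.mem_coe.1 hy)
      have hy' := Finset.mem_powerset.1 (Finset.mem_coe.1 hy')
      simp only [Sigma.mk.injEq, heq_eq_eq] at h
      have h2 : ∀ v ∈ V, (v ∈ (X y : Set (𝓞 K)) ↔ v ∈ (X y' : Set (𝓞 K))) := by
        intro v hv
        have := congrArg (fun F => v ∈ F) h.2
        simpa [hv] using this
      have h3 : ∀ w ∈ W, (A w ∈ y ↔ A w ∈ y') := by
        intro w hw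
        have := hB w (X y) (X y') (fun b hb => h2 _ (Finset.mem_image₂.2 ⟨w, hw, b, hb, rfl⟩))
        rw [hX y hy, hX y' hy'] at this
        simpa using this
      ext z
      constructor
      · intro hz
        obtain ⟨w, hw, rfl⟩ := Finset.mem_image.1 (hYW (hy hz))
        exact (h3 w hw).1 hz
      · intro hz
        obtain ⟨w, hw, rfl⟩ := Finset.mem_image.1 (hYW (hy' hz))
        exact (h3 w hw).2 hz
  rw [Finset.card_powerset, Finset.card_sigma] at hcount
  have h4 : ∑ g : G, ((D g).powerset).card ≤ Fintype.card G * 2 ^ m := by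
    rw [← smul_eq_mul, ← Finset.card_univ]
    apply Finset.sum_le_card_nsmul
    intro g _
    rw [Finset.card_powerset]
    exact Nat.pow_le_pow_right (by norm_num) (hDm g)
  have h5 : 2 ^ Y.card ≤ 2 ^ (Fintype.card G + m) := by
    rw [pow_add]
    exact (hcount.trans h4).trans (Nat.mul_le_mul_right _ Nat.lt_two_pow_self.le)
  have h6 : Y.card ≤ Fintype.card G + m := (Nat.pow_le_pow_iff_right (by norm_num)).1 h5
  have h7 : (Y.card : ℝ) ≤ Fintype.card G + U.card * p := by
    have : (m : ℝ) ≤ U.card * p := Nat.floor_le (by positivity)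
    have h6' : (Y.card : ℝ) ≤ Fintype.card G + m := by exact_mod_cast h6
    linarith
  have h8 : (U.card : ℝ) * p ≤ (p + ε) * W.card := by
    have a1 : (U.card : ℝ) * p ≤ (1 + ε) * W.card * p := mul_le_mul_of_nonneg_right hUW hp0
    have a2 : ε * W.card * p ≤ ε * W.card * 1 :=
      mul_le_mul_of_nonneg_left hp1 (by positivity)
    linarith
  rw [div_le_iff₀ hε0] at hW
  have h9 : δ = p + 2 * ε := by rw [hε]; ring
  rw [h9] at hY
  linarith

lemma fsr_transport {K L : Type*} [Field K] [NumberField K] [Field L] [NumberField L]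
    (e : K ≃+* L) (l : ℕ) {δ : ℝ}
    (hδ : ∀ T : Finset (HeightOneSpectrum (𝓞 K)),
        δ ≤ ∏ P ∈ T, (1 - ((Ideal.absNorm P.asIdeal : ℝ) ^ l)⁻¹))
    (T : Finset (HeightOneSpectrum (𝓞 L))) :
        δ ≤ ∏ P ∈ T, (1 - ((Ideal.absNorm P.asIdeal : ℝ) ^ l)⁻¹) := by
  classical
  let φ : 𝓞 K ≃+* 𝓞 L := RingOfIntegers.mapRingEquiv e
  let ψ : HeightOneSpectrum (𝓞 L) → HeightOneSpectrum (𝓞 K) := fun Q =>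
    ⟨Q.asIdeal.comap φ, Q.isPrime.comap φ, fun h => Q.ne_bot (by
      rw [eq_bot_iff]
      intro x hx
      have : φ.symm x ∈ Q.asIdeal.comap φ := by
        rw [Ideal.mem_comap]; simpa using hx
      rw [h, Ideal.mem_bot] at this
      simpa using this)⟩
  have hinj : Function.Injective ψ := by
    intro Q Q' h
    apply HeightOneSpectrum.ext
    exact Ideal.comap_injective_of_surjective φ φ.surjective (congrArg HeightOneSpectrum.asIdeal h)
  have hnorm : ∀ Q, Ideal.absNorm (ψ Q).asIdeal = Ideal.absNorm Q.asIdeal := by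
    intro Q
    rw [Ideal.absNorm_apply, Ideal.absNorm_apply, Submodule.cardQuot_apply,
      Submodule.cardQuot_apply]
    exact Nat.card_congr (Ideal.quotientEquiv (ψ Q).asIdeal Q.asIdeal φ
      (Ideal.map_comap_of_surjective φ φ.surjective Q.asIdeal).symm).toEquiv
  have := hδ (T.image ψ)
  rw [Finset.prod_image hinj.injOn] at this
  simpa only [hnorm] using this

/-- If `𝔻_{L,l}` is a factor system of `𝔻_{K,k}` (there is a surjective additive group
homomorphism `A : 𝓞 K → 𝓞 L` and a continuous surjection `f : 𝕏_{K,k} → 𝕏_{L,l}`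
intertwining the translation actions), then `K ≅ L` and `k = l`. -/
theorem factor_system_rigidity {K L : Type*} [Field K] [NumberField K]
    [Field L] [NumberField L] (k l : ℕ) (hk : 1 ≤ k) (hl : 1 ≤ l)
    (A : 𝓞 K →+ 𝓞 L) (hAsurj : Function.Surjective A)
    (f : ↥(admissibleSets K k) → ↥(admissibleSets L l))
    (hfcont : Continuous f) (hfsurj : Function.Surjective f)
    (hint : ∀ (t : 𝓞 K) (X Y : ↥(admissibleSets K k)),
      (Y : Set (𝓞 K)) = (t + ·) '' (X : Set (𝓞 K)) →
      ((f Y : Set (𝓞 L))) = (A t + ·) '' ((f X : Set (𝓞 L)))) :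
    Nonempty (K ≃+* L) ∧ k = l := by
  obtain ⟨B, Z, hZ, hB, hZt, hAinj⟩ := fsr_setup hl A hAsurj f hfcont hfsurj hint
  obtain ⟨hkl, hmul⟩ := fsr_mult hk hl A ⟨hAinj, hAsurj⟩ (Module.finrank ℚ K * Z.card)
    (fun Q q hq hqQ hlarge => fsr_incl A hAsurj Z Q q hq hlarge
      (fsr_cover hk A f B Z hZ hB hZt Q q hq hqQ))
  obtain ⟨e⟩ := fsr_iso A ⟨hAinj, hAsurj⟩ hmul
  refine ⟨⟨e⟩, ?_⟩
  by_contra hne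
  obtain ⟨δ, S, hδ, hS⟩ := fsr_prod_gap K k l hk (lt_of_le_of_ne hkl hne)
  have := fsr_entropy hk hl A hAinj f hfsurj B hB (fsr_transport e l hδ) S
  exact absurd hS (not_lt.2 this)
end

section
/- Let K be a number field and k ≥ 2 an integer. Then 𝕏_{K,k} equals the closure, in 𝒫(𝓞_K) ≅ {0,1}^{𝓞_K} with the product topology, of the orbit {t + V_{K,k} : t ∈ 𝓞_K} of the set V_{K,k} of k-free integers under the translation action of 𝓞_K. -/
open NumberField

/-- The set of `k`-free integers of a number field `K`. -/
def kfreeSet (K : Type*) [Field K] [NumberField K] (k : ℕ) : Set (𝓞 K) :=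
  {x | ∀ P : Ideal (𝓞 K), P.IsPrime → P ≠ ⊥ → x ∉ P ^ k}

open IsDedekindDomain

lemma exists_ratprime {K : Type*} [Field K] [NumberField K] (P : HeightOneSpectrum (𝓞 K)) :
    ∃ p : ℕ, p.Prime ∧ (p : 𝓞 K) ∈ P.asIdeal ∧ p ≤ Ideal.absNorm P.asIdeal := by
  have h : ∀ N : ℕ, N ≠ 0 → (N : 𝓞 K) ∈ P.asIdeal →
      ∃ p : ℕ, p.Prime ∧ (p : 𝓞 K) ∈ P.asIdeal ∧ p ≤ N := by
    intro N
    induction N using Nat.recOnMul with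
    | zero => simp
    | one => intro _ h; exact absurd ((Ideal.eq_top_iff_one _).mpr (by simpa using h)) P.isPrime.ne_top
    | prime p hp => intro _ h; exact ⟨p, hp, h, le_rfl⟩
    | mul a b iha ihb =>
      intro h0 h
      have ha : a ≠ 0 := by rintro rfl; simp at h0
      have hb : b ≠ 0 := by rintro rfl; simp at h0
      push_cast at h
      rcases P.isPrime.mem_or_mem h with h | h
      · obtain ⟨p, h1, h2, h3⟩ := iha ha h
        exact ⟨p, h1, h2, h3.trans (Nat.le_mul_of_pos_right _ (Nat.pos_of_ne_zero hb))⟩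
      · obtain ⟨p, h1, h2, h3⟩ := ihb hb h
        exact ⟨p, h1, h2, h3.trans (Nat.le_mul_of_pos_left _ (Nat.pos_of_ne_zero ha))⟩
  exact h _ (by rw [Ne, Ideal.absNorm_eq_zero_iff]; exact P.ne_bot) (Ideal.absNorm_mem _)

lemma fiber_card {K : Type*} [Field K] [NumberField K] (p : ℕ) (hp : p.Prime)
    (G : Finset (HeightOneSpectrum (𝓞 K))) (h1 : ∀ P ∈ G, (p : 𝓞 K) ∈ P.asIdeal)
    (h2 : ∀ P ∈ G, p ≤ Ideal.absNorm P.asIdeal) :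
    G.card ≤ Module.finrank ℤ (𝓞 K) := by
  classical
  have hd : ∏ P ∈ G, P.asIdeal ∣ Ideal.span {(p : 𝓞 K)} := by
    have := Finset.prod_primes_dvd (s := G.image HeightOneSpectrum.asIdeal)
      (Ideal.span {(p : 𝓞 K)}) (by
        intro a ha
        obtain ⟨P, _, rfl⟩ := Finset.mem_image.mp ha
        exact P.prime) (by
        intro a ha
        obtain ⟨P, hP, rfl⟩ := Finset.mem_image.mp ha
        rw [Ideal.dvd_span_singleton]
        exact h1 P hP)
    rwa [Finset.prod_image (fun P _ Q _ h => HeightOneSpectrum.ext h)] at this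
  have hn := map_dvd Ideal.absNorm hd
  rw [map_prod, Ideal.absNorm_span_singleton] at hn
  have e : (Algebra.norm ℤ (p : 𝓞 K)).natAbs = p ^ Module.finrank ℤ (𝓞 K) := by
    have := Algebra.norm_algebraMap_of_basis (RingOfIntegers.basis K) (p : ℤ)
    simp only [eq_intCast, Int.cast_natCast] at this
    rw [this, Int.natAbs_pow, Module.finrank_eq_card_basis (RingOfIntegers.basis K)]
    simp
  rw [e] at hn
  have h3 := Nat.le_of_dvd (pow_pos hp.pos _) hn
  have h4 : p ^ G.card ≤ ∏ P ∈ G, Ideal.absNorm P.asIdeal := by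
    rw [← Finset.prod_const]
    exact Finset.prod_le_prod' h2
  exact (Nat.pow_le_pow_iff_right hp.one_lt).mp (h4.trans h3)

lemma summable_inv_sq (K : Type*) [Field K] [NumberField K] :
    Summable fun P : HeightOneSpectrum (𝓞 K) => 1 / ((Ideal.absNorm (P.asIdeal ^ 2) : ℕ) : ℝ) := by
  classical
  choose p hp hpm hple using (exists_ratprime (K := K))
  have hsum : Summable fun n : ℕ => ((n : ℝ) ^ 2)⁻¹ := Real.summable_nat_pow_inv.mpr (by norm_num)
  set d := Module.finrank ℤ (𝓞 K)
  refine summable_of_sum_le (c := d * ∑' n : ℕ, ((n : ℝ) ^ 2)⁻¹) (fun P => by positivity) ?_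
  intro G
  rw [← Finset.sum_fiberwise_of_maps_to (t := G.image p) (g := p)
    (fun P hP => Finset.mem_image_of_mem _ hP)]
  calc _ ≤ ∑ j ∈ G.image p, (d : ℝ) * ((j : ℝ) ^ 2)⁻¹ := by
        refine Finset.sum_le_sum fun j hj => ?_
        obtain ⟨P0, _, rfl⟩ := Finset.mem_image.mp hj
        have hc := fiber_card (p P0) (hp P0) {P ∈ G | p P = p P0}
          (fun P hP => by rw [← (Finset.mem_filter.mp hP).2]; exact hpm P)
          (fun P hP => by rw [← (Finset.mem_filter.mp hP).2]; exact hple P)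
        calc _ ≤ ∑ P ∈ G with p P = p P0, (((p P0 : ℕ) : ℝ) ^ 2)⁻¹ := by
              refine Finset.sum_le_sum fun P hP => ?_
              have h := hple P
              rw [(Finset.mem_filter.mp hP).2] at h
              have h0 := (hp P0).pos
              rw [map_pow, one_div]
              push_cast
              gcongr
          _ ≤ _ := by
              rw [Finset.sum_const, nsmul_eq_mul]
              gcongr
    _ = d * ∑ j ∈ G.image p, ((j : ℝ) ^ 2)⁻¹ := by rw [Finset.mul_sum]
    _ ≤ _ := by
        gcongr
        exact hsum.sum_le_tsum _ (fun _ _ => by positivity)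

lemma infinite_primes (K : Type*) [Field K] [NumberField K] :
    Infinite (HeightOneSpectrum (𝓞 K)) := by
  by_contra hinf
  rw [not_infinite_iff_finite] at hinf
  have := Fintype.ofFinite (HeightOneSpectrum (𝓞 K))
  set M : ℕ := ∏ P : HeightOneSpectrum (𝓞 K), Ideal.absNorm P.asIdeal with hM
  have hM0 : M ≠ 0 := Finset.prod_ne_zero_iff.mpr fun P _ => by
    rw [Ne, Ideal.absNorm_eq_zero_iff]; exact P.ne_bot
  have hmem : ∀ P : HeightOneSpectrum (𝓞 K), (M : 𝓞 K) ∈ P.asIdeal := fun P =>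
    P.asIdeal.mem_of_dvd (Nat.cast_dvd_cast (Finset.dvd_prod_of_mem _ (Finset.mem_univ P)))
      (Ideal.absNorm_mem _)
  have hnu : ¬ IsUnit ((M + 1 : ℕ) : 𝓞 K) := by
    intro hu
    have h := (Int.isUnit_iff_natAbs_eq.mp (hu.map (Algebra.norm ℤ)))
    have := Algebra.norm_algebraMap_of_basis (RingOfIntegers.basis K) ((M + 1 : ℕ) : ℤ)
    simp only [eq_intCast, Int.cast_natCast] at this
    rw [this, Int.natAbs_pow, Int.natAbs_natCast] at h
    have : M + 1 = 1 := (Nat.pow_eq_one.mp h).resolve_right Fintype.card_ne_zero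
    omega
  obtain ⟨Q, hQ, hQm⟩ := exists_max_ideal_of_mem_nonunits hnu
  have hQ0 : Q ≠ ⊥ := by
    rintro rfl
    rw [Ideal.mem_bot] at hQm
    exact absurd (Nat.cast_eq_zero.mp hQm) (by omega)
  have h1 := hmem ⟨Q, hQ.isPrime, hQ0⟩
  refine hQ.ne_top ((Ideal.eq_top_iff_one _).mpr ?_)
  have := Q.sub_mem hQm h1
  simpa using this

lemma box_count {K : Type*} [Field K] [NumberField K] {ι : Type*} [Fintype ι] [Nonempty ι]
    [DecidableEq ι] (b : Module.Basis ι ℤ (𝓞 K)) (I : Ideal (𝓞 K)) (hI : I ≠ ⊥) (R : ℕ)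
    (Z : Finset (𝓞 K)) (hZ : ∀ z ∈ Z, ∀ i, 0 ≤ b.repr z i ∧ b.repr z i < R)
    (hd : ∀ z ∈ Z, ∀ w ∈ Z, z - w ∈ I) :
    (Z.card : ℝ) ≤ 1 + (2 ^ Fintype.card ι * (ClassGroup.normBound AbsoluteValue.abs b : ℝ)) *
      (R : ℝ) ^ Fintype.card ι * (1 / (Ideal.absNorm I : ℝ)) := by
  classical
  set n := Fintype.card ι with hn
  have hn0 : n ≠ 0 := Fintype.card_ne_zero
  set C := ClassGroup.normBound AbsoluteValue.abs b with hC
  have hCpos : 0 < C := ClassGroup.normBound_pos _ _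
  set N := Ideal.absNorm I with hN
  have hNpos : 0 < N := Nat.pos_of_ne_zero (by rwa [hN, Ne, Ideal.absNorm_eq_zero_iff])
  have hex : ∃ s : ℕ, (N : ℤ) ≤ C * (s : ℤ) ^ n := by
    refine ⟨N, ?_⟩
    have h1 : (N : ℤ) ≤ (N : ℤ) ^ n := le_self_pow₀ (by exact_mod_cast hNpos) hn0
    nlinarith
  obtain ⟨s, hs, hmin⟩ : ∃ s : ℕ, (N : ℤ) ≤ C * (s : ℤ) ^ n ∧
      ∀ r < s, C * (r : ℤ) ^ n < N :=
    ⟨Nat.find hex, Nat.find_spec hex, fun r hr => not_le.mp (Nat.find_min hex hr)⟩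
  have hs0 : 0 < s := by
    rcases Nat.eq_zero_or_pos s with h | h
    · subst h
      simp [hn0] at hs
      omega
    · exact h
  have hcard : Z.card ≤ (R / s + 1) ^ n := by
    have : (Fintype.piFinset (fun _ : ι => Finset.Ico (0 : ℤ) ((R / s + 1 : ℕ) : ℤ))).card
        = (R / s + 1) ^ n := by
      simp [Fintype.card_piFinset, hn]
      norm_cast
    rw [← this]
    refine Finset.card_le_card_of_injOn (fun z i => b.repr z i / (s : ℤ)) ?_ ?_
    · intro z hz
      simp only [Finset.mem_coe, Fintype.mem_piFinset, Finset.mem_Ico]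
      intro i
      obtain ⟨h0, h1⟩ := hZ z hz i
      refine ⟨Int.ediv_nonneg h0 (by positivity), ?_⟩
      have : b.repr z i / (s : ℤ) ≤ (R : ℤ) / s := Int.ediv_le_ediv (by exact_mod_cast hs0) h1.le
      push_cast
      omega
    · intro z hz w hw hzw
      by_contra hne
      have hsub : z - w ≠ 0 := sub_ne_zero.mpr hne
      have hb : ∀ i, AbsoluteValue.abs (b.repr (z - w) i) ≤ ((s - 1 : ℕ) : ℤ) := by
        intro i
        have h := congrFun hzw i
        simp only at h
        have e1 := Int.mul_ediv_add_emod (b.repr z i) s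
        have e2 := Int.mul_ediv_add_emod (b.repr w i) s
        have p1 := Int.emod_nonneg (b.repr z i) (b := s) (by omega)
        have p2 := Int.emod_nonneg (b.repr w i) (b := s) (by omega)
        have q1 := Int.emod_lt_of_pos (b.repr z i) (b := s) (by omega)
        have q2 := Int.emod_lt_of_pos (b.repr w i) (b := s) (by omega)
        rw [h] at e1
        simp only [map_sub, Finsupp.sub_apply, AbsoluteValue.abs_apply]
        rw [abs_le]
        constructor <;> omega
      have h1 := ClassGroup.norm_le AbsoluteValue.abs b (z - w) hb
      have h2 := hmin (s - 1) (by omega)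
      have h3 := Ideal.absNorm_dvd_norm_of_mem (hd z hz w hw)
      rw [AbsoluteValue.abs_apply] at h1
      have h4 : Algebra.norm ℤ (z - w) = 0 :=
        Int.eq_zero_of_abs_lt_dvd h3 (lt_of_le_of_lt h1 h2)
      exact hsub (Algebra.norm_eq_zero_iff.mp h4)
  have hpos : (0:ℝ) ≤ (2 ^ n * (C : ℝ)) * (R : ℝ) ^ n * (1 / (N : ℝ)) := by
    have : (0:ℝ) < C := by exact_mod_cast hCpos
    positivity
  rcases lt_or_ge R s with h | h
  · rw [Nat.div_eq_of_lt h] at hcard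
    have : (Z.card : ℝ) ≤ 1 := by exact_mod_cast (by simpa using hcard)
    linarith
  · have h1 : (R / s + 1 : ℕ) * s ≤ 2 * R := by
      have := Nat.div_mul_le_self R s
      nlinarith
    have h2 : Z.card * s ^ n ≤ (2 * R) ^ n := by
      calc Z.card * s ^ n ≤ (R / s + 1) ^ n * s ^ n := by gcongr
        _ = ((R / s + 1) * s) ^ n := by rw [mul_pow]
        _ ≤ _ := by gcongr
    have h3 : (Z.card : ℝ) * s ^ n ≤ 2 ^ n * R ^ n := by
      rw [← mul_pow]; exact_mod_cast h2
    have h4 : (N : ℝ) ≤ C * s ^ n := by exact_mod_cast hs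
    have h5 : (Z.card : ℝ) * N ≤ 2 ^ n * C * R ^ n := by
      have : (0:ℝ) < C := by exact_mod_cast hCpos
      calc (Z.card : ℝ) * N ≤ Z.card * (C * s ^ n) := by gcongr
        _ = C * (Z.card * s ^ n) := by ring
        _ ≤ C * (2 ^ n * R ^ n) := by gcongr
        _ = _ := by ring
    rw [mul_one_div]
    have : (Z.card : ℝ) ≤ 2 ^ n * C * R ^ n / N := by
      rw [le_div_iff₀ (by exact_mod_cast hNpos)]; exact h5
    linarith

set_option maxHeartbeats 2000000 in
lemma sieve {K : Type*} [Field K] [NumberField K] {ι : Type*} [Fintype ι] [Nonempty ι]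
    [DecidableEq ι] (b : Module.Basis ι ℤ (𝓞 K)) (m : ℕ) (U : Finset (𝓞 K))
    (hU : ∀ u ∈ U, ∀ z : 𝓞 K, u + m * z ≠ 0) (ε : ℝ)
    (hε : (U.card : ℝ) * ((2 ^ Fintype.card ι *
      (ClassGroup.normBound AbsoluteValue.abs b : ℝ)) * ε) ≤ 1 / 2)
    (hG : ∀ G : Finset (HeightOneSpectrum (𝓞 K)), (∀ P ∈ G, (m : 𝓞 K) ∉ P.asIdeal) →
      ∑ P ∈ G, 1 / ((Ideal.absNorm (P.asIdeal ^ 2) : ℕ) : ℝ) ≤ ε) :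
    ∃ z : 𝓞 K, ∀ P : HeightOneSpectrum (𝓞 K), (m : 𝓞 K) ∉ P.asIdeal →
      ∀ u ∈ U, u + m * z ∉ P.asIdeal ^ 2 := by
  classical
  by_contra! hbad
  set n := Fintype.card ι with hn
  have hn0 : n ≠ 0 := Fintype.card_ne_zero
  set C := ClassGroup.normBound AbsoluteValue.abs b with hC
  have hCpos : 0 < C := ClassGroup.normBound_pos _ _
  have hCR : (0 : ℝ) < C := by exact_mod_cast hCpos
  -- coordinates of elements of U
  obtain ⟨D, hD⟩ : ∃ D : ℕ, ∀ u ∈ U, ∀ i, |b.repr u i| ≤ (D : ℤ) := by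
    refine ⟨∑ u ∈ U, ∑ i, (b.repr u i).natAbs, fun u hu i => ?_⟩
    rw [Int.abs_eq_natAbs]
    have h1 : (b.repr u i).natAbs ≤ ∑ i, (b.repr u i).natAbs :=
      Finset.single_le_sum (f := fun i => (b.repr u i).natAbs) (fun _ _ => Nat.zero_le _)
        (Finset.mem_univ i)
    have h2 := Finset.single_le_sum (f := fun u => ∑ i, (b.repr u i).natAbs)
      (fun _ _ => Nat.zero_le _) hu
    exact_mod_cast h1.trans h2
  set C2 : ℝ := C * ((D : ℝ) + m) ^ n with hC2
  have hC20 : 0 ≤ C2 := by positivity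
  set δ : ℝ := 1 / (4 * (U.card * C2 + 1)) with hδ
  have hδpos : 0 < δ := by positivity
  clear_value δ C2
  obtain ⟨S1, hS1⟩ := summable_iff_vanishing_norm.mp (summable_inv_sq K) δ hδpos
  set R : ℕ := 4 * (U.card * S1.card) + 1 with hR
  have hR1 : 1 ≤ R := by omega
  clear_value R
  set box : Finset (𝓞 K) :=
    (Fintype.piFinset (fun _ : ι => Finset.Ico (0 : ℤ) (R : ℤ))).map
      b.equivFun.symm.toEquiv.toEmbedding with hbox
  have hboxcard : box.card = R ^ n := by
    simp [hbox, Fintype.card_piFinset, hn]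
  have hboxmem : ∀ z ∈ box, ∀ i, 0 ≤ b.repr z i ∧ b.repr z i < R := by
    intro z hz i
    obtain ⟨x, hx, rfl⟩ := Finset.mem_map.mp hz
    have := Finset.mem_Ico.mp (Fintype.mem_piFinset.mp hx i)
    have e : b.repr (b.equivFun.symm x) i = x i := by
      rw [← Module.Basis.equivFun_apply, LinearEquiv.apply_symm_apply]
    change 0 ≤ b.repr (b.equivFun.symm x) i ∧ b.repr (b.equivFun.symm x) i < R
    rw [e]; exact this
  have hnormpos : ∀ P : HeightOneSpectrum (𝓞 K), 0 < Ideal.absNorm P.asIdeal := fun P =>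
    Nat.pos_of_ne_zero (by rw [Ne, Ideal.absNorm_eq_zero_iff]; exact P.ne_bot)
  have hnormpos2 : ∀ P : HeightOneSpectrum (𝓞 K), 0 < Ideal.absNorm (P.asIdeal ^ 2) :=
    fun P => by rw [map_pow]; exact pow_pos (hnormpos P) 2
  -- norm bound
  have hnb : ∀ z ∈ box, ∀ u ∈ U, ∀ P : HeightOneSpectrum (𝓞 K), u + m * z ∈ P.asIdeal ^ 2 →
      ((Ideal.absNorm (P.asIdeal ^ 2) : ℕ) : ℤ) ≤ C * (((D : ℤ) + m) * R) ^ n := by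
    intro z hz u hu P hP
    have hb : ∀ i, AbsoluteValue.abs (b.repr (u + m * z) i) ≤ ((D : ℤ) + m) * R := by
      intro i
      have e : b.repr (u + m * z) i = b.repr u i + m * b.repr z i := by
        rw [← nsmul_eq_mul, map_add, map_nsmul]
        simp
      rw [e, AbsoluteValue.abs_apply]
      obtain ⟨h0, h1⟩ := hboxmem z hz i
      have h2 := hD u hu i
      have hm0 : (0 : ℤ) ≤ m := by positivity
      have hD0 : (0 : ℤ) ≤ D := by positivity
      have hR1' : (1 : ℤ) ≤ R := by exact_mod_cast hR1
      calc |b.repr u i + m * b.repr z i| ≤ |b.repr u i| + |m * b.repr z i| := abs_add_le _ _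
        _ = |b.repr u i| + m * b.repr z i := by rw [abs_of_nonneg (mul_nonneg hm0 h0)]
        _ ≤ D + m * R := by gcongr
        _ ≤ (D + m) * R := by nlinarith
    have h1 := ClassGroup.norm_le AbsoluteValue.abs b (u + m * z) hb
    rw [AbsoluteValue.abs_apply] at h1
    refine le_trans ?_ h1
    refine Int.le_of_dvd (abs_pos.mpr ?_) ((dvd_abs _ _).mpr (Ideal.absNorm_dvd_norm_of_mem hP))
    rw [Ne, Algebra.norm_eq_zero_iff]
    exact hU u hu z
  set T : ℤ := C * (((D : ℤ) + m) * R) ^ n with hT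
  have hTR : (T : ℝ) = C2 * R ^ n := by
    rw [hT, hC2]; push_cast; rw [mul_pow]; ring
  have hfin : {P : HeightOneSpectrum (𝓞 K) | (m : 𝓞 K) ∉ P.asIdeal ∧
      ((Ideal.absNorm (P.asIdeal ^ 2) : ℕ) : ℤ) ≤ T}.Finite := by
    refine (Ring.HasFiniteQuotients.finite_absNorm_heightOneSpectrum_le (R := 𝓞 K)
      T.toNat).subset ?_
    rintro P ⟨_, hP⟩
    have h1 : Ideal.absNorm P.asIdeal ≤ Ideal.absNorm (P.asIdeal ^ 2) := by
      rw [map_pow]; exact Nat.le_self_pow two_ne_zero _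
    show Ideal.absNorm P.asIdeal ≤ T.toNat
    omega
  set G := hfin.toFinset with hGdef
  have hGm : ∀ P, P ∈ G ↔ (m : 𝓞 K) ∉ P.asIdeal ∧
      ((Ideal.absNorm (P.asIdeal ^ 2) : ℕ) : ℤ) ≤ T := fun P => by simp [hGdef]
  clear_value G T
  -- covering
  have hcov : box ⊆ G.biUnion fun P => U.biUnion fun u =>
      box.filter fun z => u + m * z ∈ P.asIdeal ^ 2 := by
    intro z hz
    obtain ⟨P, hP, u, hu, h⟩ := hbad z
    simp only [Finset.mem_biUnion, Finset.mem_filter]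
    exact ⟨P, (hGm P).mpr ⟨hP, hnb z hz u hu P h⟩, u, hu, hz, h⟩
  have hc1 : (R : ℝ) ^ n ≤ ∑ P ∈ G, ∑ u ∈ U,
      ((box.filter fun z => u + m * z ∈ P.asIdeal ^ 2).card : ℝ) := by
    have h := (Finset.card_le_card hcov).trans (Finset.card_biUnion_le.trans
      (Finset.sum_le_sum fun P _ => Finset.card_biUnion_le))
    rw [hboxcard] at h
    exact_mod_cast h
  have hc2 : ∀ P ∈ G, ∀ u ∈ U,
      ((box.filter fun z => u + m * z ∈ P.asIdeal ^ 2).card : ℝ) ≤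
      1 + (2 ^ n * (C : ℝ)) * (R : ℝ) ^ n * (1 / ((Ideal.absNorm (P.asIdeal ^ 2) : ℕ) : ℝ)) := by
    intro P hP u hu
    refine box_count b (P.asIdeal ^ 2) (pow_ne_zero 2 P.ne_bot) R _
      (fun z hz => hboxmem z (Finset.mem_filter.mp hz).1) ?_
    intro z hz w hw
    have h1 := (P.asIdeal ^ 2).sub_mem (Finset.mem_filter.mp hz).2 (Finset.mem_filter.mp hw).2
    have h2 : (m : 𝓞 K) * (z - w) ∈ P.asIdeal ^ 2 := by
      convert h1 using 1; ring
    have := P.isPrime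
    exact (Ideal.IsPrime.mul_mem_pow P.asIdeal h2).resolve_left ((hGm P).mp hP).1
  have hc3 : (R : ℝ) ^ n ≤ U.card * (G.card + (2 ^ n * (C : ℝ)) * (R : ℝ) ^ n *
      ∑ P ∈ G, 1 / ((Ideal.absNorm (P.asIdeal ^ 2) : ℕ) : ℝ)) := by
    refine hc1.trans ((Finset.sum_le_sum fun P hP => Finset.sum_le_sum fun u hu =>
      hc2 P hP u hu).trans (le_of_eq ?_))
    simp only [Finset.sum_const, nsmul_eq_mul]
    rw [← Finset.mul_sum, Finset.sum_add_distrib, ← Finset.mul_sum]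
    simp
  have hsum := hG G fun P hP => ((hGm P).mp hP).1
  have hGc : (G.card : ℝ) ≤ S1.card + C2 * R ^ n * δ := by
    have h1 : G.card ≤ S1.card + (G \ S1).card := by
      rw [← Finset.card_union_of_disjoint Finset.disjoint_sdiff]
      exact Finset.card_le_card (by intro x hx; simp [hx])
    have h2 := hS1 (G \ S1) Finset.sdiff_disjoint
    have h2 := (le_abs_self _).trans_lt h2
    have h3 : ((G \ S1).card : ℝ) ≤ (C2 * R ^ n) *
        ∑ P ∈ G \ S1, 1 / ((Ideal.absNorm (P.asIdeal ^ 2) : ℕ) : ℝ) := by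
      rw [Finset.mul_sum, Finset.card_eq_sum_ones]
      push_cast
      refine Finset.sum_le_sum fun P hP => ?_
      have h4 := ((hGm P).mp (Finset.mem_sdiff.mp hP).1).2
      have h5 : ((Ideal.absNorm (P.asIdeal ^ 2) : ℕ) : ℝ) ≤ C2 * R ^ n := by
        rw [← hTR]; exact_mod_cast h4
      rw [mul_one_div, le_div_iff₀ (by exact_mod_cast hnormpos2 P), one_mul]
      exact h5
    have h6 : (G.card : ℝ) ≤ S1.card + (G \ S1).card := by exact_mod_cast h1
    have h7 : (C2 * R ^ n) * ∑ P ∈ G \ S1, 1 / ((Ideal.absNorm (P.asIdeal ^ 2) : ℕ) : ℝ)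
        ≤ C2 * R ^ n * δ :=
      mul_le_mul_of_nonneg_left h2.le (mul_nonneg hC20 (pow_nonneg (Nat.cast_nonneg _) _))
    linarith
  have hδ2 : (U.card : ℝ) * C2 * δ ≤ 1 / 4 := by
    rw [hδ, mul_one_div, div_le_iff₀ (by positivity)]
    linarith
  have hX : (0:ℝ) ≤ (R : ℝ) ^ n := by positivity
  have f1 : (U.card : ℝ) * ((2 ^ n * (C : ℝ)) * (R : ℝ) ^ n *
      ∑ P ∈ G, 1 / ((Ideal.absNorm (P.asIdeal ^ 2) : ℕ) : ℝ)) ≤ (R : ℝ) ^ n * (1 / 2) := by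
    calc _ ≤ (U.card : ℝ) * ((2 ^ n * (C : ℝ)) * (R : ℝ) ^ n * ε) := by gcongr
      _ = (R : ℝ) ^ n * ((U.card : ℝ) * ((2 ^ n * (C : ℝ)) * ε)) := by ring
      _ ≤ _ := by gcongr
  have f2 : (U.card : ℝ) * G.card ≤ U.card * S1.card + (R : ℝ) ^ n * (1 / 4) := by
    calc (U.card : ℝ) * G.card ≤ U.card * (S1.card + C2 * R ^ n * δ) := by gcongr
      _ = U.card * S1.card + (R : ℝ) ^ n * (U.card * C2 * δ) := by ring
      _ ≤ _ := by gcongr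
  have f3 : (R : ℝ) ≤ (R : ℝ) ^ n := le_self_pow₀ (by exact_mod_cast hR1) hn0
  have f4 : (R : ℝ) = 4 * (U.card * S1.card) + 1 := by rw [hR]; push_cast; ring
  rw [mul_add] at hc3
  linarith

lemma mem_closure_set {G : Type*} (S : Set (Set G)) (X : Set G) :
    X ∈ closure S ↔ ∀ F : Finset G, ∃ Y ∈ S, ∀ x ∈ F, (x ∈ X ↔ x ∈ Y) := by
  classical
  rw [closure_induced, mem_closure_iff]
  constructor
  · intro h F
    obtain ⟨f, hf, Y, hY, rfl⟩ := h ((F : Set G).pi fun x =>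
      {@decide (x ∈ X) (Classical.propDecidable _)})
      (isOpen_set_pi F.finite_toSet fun _ _ => isOpen_discrete _) (by intro x _; simp)
    refine ⟨Y, hY, fun x hx => ?_⟩
    have h1 := hf x hx
    simp only [Set.mem_singleton_iff] at h1
    rw [decide_eq_decide] at h1
    exact h1.symm
  · intro h o ho hX
    obtain ⟨F, u, hu, hsub⟩ := isOpen_pi_iff.mp ho _ hX
    obtain ⟨Y, hY, hXY⟩ := h F
    refine ⟨_, hsub ?_, Y, hY, rfl⟩
    intro x hx
    have h1 := (hu x hx).2
    have h2 : (@decide (x ∈ X) (Classical.propDecidable _)) =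
        (@decide (x ∈ Y) (Classical.propDecidable _)) := decide_eq_decide.mpr (hXY x hx)
    simp only at h1 ⊢
    rwa [← h2]

lemma mem_translate {K : Type*} [Field K] [NumberField K] (k : ℕ) (t x : 𝓞 K) :
    x ∈ (t + ·) '' kfreeSet K k ↔ x - t ∈ kfreeSet K k := by
  constructor
  · rintro ⟨v, hv, rfl⟩
    simpa using hv
  · intro h
    exact ⟨x - t, h, by simp⟩

lemma finite_mem {K : Type*} [Field K] [NumberField K] (x : 𝓞 K) (hx : x ≠ 0) :
    {P : HeightOneSpectrum (𝓞 K) | x ∈ P.asIdeal}.Finite := by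
  have h := Ideal.finite_factors (I := Ideal.span {x}) (by simpa using hx)
  simpa only [Ideal.dvd_span_singleton] using h

set_option maxHeartbeats 1000000 in
lemma approx {K : Type*} [Field K] [NumberField K] (k : ℕ) (hk : 2 ≤ k) (X : Set (𝓞 K))
    (hX : X ∈ admissibleSets K k) (F : Finset (𝓞 K)) :
    ∃ t : 𝓞 K, ∀ x ∈ F, (x ∈ X ↔ x - t ∈ kfreeSet K k) := by
  classical
  set A := F.filter (· ∈ X) with hA
  set B := F.filter (· ∉ X) with hB
  have hk0 : k ≠ 0 := by omega
  choose c hc using fun P : HeightOneSpectrum (𝓞 K) => hX P.asIdeal P.isPrime P.ne_bot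
  have hinf := infinite_primes K
  set T : Set (HeightOneSpectrum (𝓞 K)) := {P | ∀ a ∈ A, ∀ b ∈ B, a - b ∉ P.asIdeal} with hT
  have hTinf : T.Infinite := by
    have hfin : Tᶜ.Finite := by
      have : Tᶜ ⊆ ⋃ a ∈ A, ⋃ b ∈ B, {P : HeightOneSpectrum (𝓞 K) | a - b ∈ P.asIdeal} := by
        intro P hP
        simp only [hT, Set.mem_compl_iff, Set.mem_ofPred_eq] at hP
        push Not at hP
        simp only [Set.mem_iUnion]
        obtain ⟨a, ha, b, hb, h⟩ := hP
        exact ⟨a, ha, b, hb, h⟩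
      refine Set.Finite.subset ?_ this
      refine Set.Finite.biUnion A.finite_toSet fun a ha => Set.Finite.biUnion B.finite_toSet
        fun b hb => finite_mem _ ?_
      rw [sub_ne_zero]
      rintro rfl
      exact (Finset.mem_filter.mp hb).2 (Finset.mem_filter.mp ha).2
    have := hfin.infinite_compl
    rwa [compl_compl] at this
  have hTi := hTinf.to_subtype
  set Q : B ↪ T := (B.equivFin.toEmbedding.trans Fin.valEmbedding).trans (Infinite.natEmbedding T)
  set d : HeightOneSpectrum (𝓞 K) → 𝓞 K := fun P =>
    if h : ∃ b : B, (Q b).1 = P then h.choose.1 else c P with hd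
  have hdQ : ∀ b : B, d (Q b).1 = b.1 := by
    intro b
    have h : ∃ b' : B, (Q b').1 = (Q b).1 := ⟨b, rfl⟩
    simp only [hd]
    rw [dif_pos h]
    exact congrArg Subtype.val (Q.injective (Subtype.ext h.choose_spec))
  have hdA : ∀ P, ∀ a ∈ A, a - d P ∉ P.asIdeal ^ k := by
    intro P a ha
    by_cases h : ∃ b : B, (Q b).1 = P
    · obtain ⟨b, rfl⟩ := h
      rw [hdQ]
      intro hmem
      exact (Q b).2 a ha b.1 b.2 (Ideal.pow_le_self hk0 hmem)
    · simp only [hd]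
      rw [dif_neg h]
      exact hc P a (Finset.mem_filter.mp ha).2
  have hne : Nonempty (Module.Free.ChooseBasisIndex ℤ (𝓞 K)) := inferInstance
  set b := RingOfIntegers.basis K
  set C1 : ℝ := 2 ^ Fintype.card (Module.Free.ChooseBasisIndex ℤ (𝓞 K)) *
      (ClassGroup.normBound AbsoluteValue.abs b : ℝ) with hC1
  have hC1pos : 0 < C1 := by
    have : 0 < ClassGroup.normBound AbsoluteValue.abs b := ClassGroup.normBound_pos _ _
    have : (0:ℝ) < ClassGroup.normBound AbsoluteValue.abs b := by exact_mod_cast this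
    positivity
  set ε : ℝ := 1 / (2 * (A.card * C1 + 1)) with hεd
  have hεpos : 0 < ε := by positivity
  obtain ⟨S0, hS0⟩ := summable_iff_vanishing_norm.mp (summable_inv_sq K) ε hεpos
  obtain ⟨P0⟩ : Nonempty (HeightOneSpectrum (𝓞 K)) := inferInstance
  set S' := insert P0 (S0 ∪ Finset.univ.image fun b : B => (Q b).1) with hS'
  set m0 : ℕ := ∏ P ∈ S', Ideal.absNorm P.asIdeal with hm0
  have hm00 : m0 ≠ 0 := Finset.prod_ne_zero_iff.mpr fun P _ => by
    rw [Ne, Ideal.absNorm_eq_zero_iff]; exact P.ne_bot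
  have hm0S : ∀ P ∈ S', (m0 : 𝓞 K) ∈ P.asIdeal := fun P hP =>
    P.asIdeal.mem_of_dvd (Nat.cast_dvd_cast (Finset.dvd_prod_of_mem _ hP)) (Ideal.absNorm_mem _)
  have hfinS := finite_mem (m0 : 𝓞 K) (by exact_mod_cast hm00)
  set S := hfinS.toFinset
  have hSmem : ∀ P, P ∈ S ↔ (m0 : 𝓞 K) ∈ P.asIdeal := fun P => hfinS.mem_toFinset
  obtain ⟨t0, ht0⟩ := IsDedekindDomain.exists_forall_sub_mem_ideal (s := S)
    (fun P : HeightOneSpectrum (𝓞 K) => P.asIdeal) (fun _ => k) (fun P _ => P.prime)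
    (fun P _ P' _ h h' => h (HeightOneSpectrum.ext h')) (fun P => d P.1)
  set m : ℕ := m0 ^ k with hm
  have hmP : ∀ P ∈ S, ∀ z : 𝓞 K, (m : 𝓞 K) * z ∈ P.asIdeal ^ k := by
    intro P hP z
    refine Ideal.mul_mem_right _ _ ?_
    rw [hm]; push_cast
    exact Ideal.pow_mem_pow ((hSmem P).mp hP) k
  have key : ∀ P ∈ S, ∀ z : 𝓞 K, (t0 + m * z) - d P ∈ P.asIdeal ^ k := by
    intro P hP z
    have := (P.asIdeal ^ k).add_mem (ht0 P hP) (hmP P hP z)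
    convert this using 1; ring
  have keyA : ∀ P ∈ S, ∀ z : 𝓞 K, ∀ a ∈ A, a - (t0 + m * z) ∉ P.asIdeal ^ k := by
    intro P hP z a ha hmem
    refine hdA P a ha ?_
    have := (P.asIdeal ^ k).add_mem hmem (key P hP z)
    convert this using 1; ring
  have hP0 : P0 ∈ S := (hSmem P0).mpr (hm0S P0 (Finset.mem_insert_self _ _))
  obtain ⟨z, hz⟩ := sieve b m (A.image (t0 - ·)) (by
      intro u hu z h0
      obtain ⟨a, ha, rfl⟩ := Finset.mem_image.mp hu
      refine keyA P0 hP0 z a ha ?_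
      have : a - (t0 + m * z) = 0 := by
        rw [← neg_eq_zero, ← h0]; ring
      rw [this]; exact zero_mem _) ε (by
      have h1 : ((A.image (t0 - ·)).card : ℝ) ≤ A.card := by exact_mod_cast Finset.card_image_le
      calc _ ≤ (A.card : ℝ) * (C1 * ε) := by gcongr
        _ ≤ 1 / 2 := by
          rw [← mul_assoc, hεd, mul_one_div, div_le_iff₀ (by positivity)]
          linarith) (by
      intro G hG
      refine (le_abs_self _).trans (hS0 G ?_).le
      rw [Finset.disjoint_left]
      intro P hP hPS
      refine hG P hP ?_
      have h1 := hm0S P (Finset.mem_insert_of_mem (Finset.mem_union_left _ hPS))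
      rw [hm]; push_cast
      exact Ideal.pow_mem_of_mem _ h1 k (by omega))
  refine ⟨t0 + m * z, fun x hx => ?_⟩
  by_cases hxX : x ∈ X
  · simp only [hxX, true_iff]
    have hxA : x ∈ A := Finset.mem_filter.mpr ⟨hx, hxX⟩
    intro P hP hP0 hmem
    set P' : HeightOneSpectrum (𝓞 K) := ⟨P, hP, hP0⟩
    by_cases hS : P' ∈ S
    · exact keyA P' hS z x hxA hmem
    · have hmP' : (m : 𝓞 K) ∉ P'.asIdeal := by
        intro h
        rw [hm] at h; push_cast at h
        exact hS ((hSmem P').mpr (P'.isPrime.mem_of_pow_mem _ h))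
      refine hz P' hmP' (t0 - x) (Finset.mem_image_of_mem _ hxA) ?_
      have := neg_mem (Ideal.pow_le_pow_right hk hmem)
      convert this using 1; ring
  · simp only [hxX, false_iff]
    have hxB : x ∈ B := Finset.mem_filter.mpr ⟨hx, hxX⟩
    intro h
    set P := (Q ⟨x, hxB⟩).1 with hPd
    have hPS : P ∈ S := (hSmem P).mpr (hm0S P (Finset.mem_insert_of_mem
      (Finset.mem_union_right _ (Finset.mem_image_of_mem _ (Finset.mem_univ _)))))
    refine h P.asIdeal P.isPrime P.ne_bot ?_
    have h1 := neg_mem (key P hPS z)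
    rw [hPd, hdQ] at h1
    convert h1 using 1; ring

/-- For `k ≥ 2`, the space `𝕏_{K,k}` of admissible sets is the closure of the orbit of
the set `V_{K,k}` of `k`-free integers under the translation action of `𝓞 K`. -/
theorem admissible_eq_orbit_closure {K : Type*} [Field K] [NumberField K]
    (k : ℕ) (hk : 2 ≤ k) :
    admissibleSets K k =
      closure {S : Set (𝓞 K) | ∃ t : 𝓞 K, S = (t + ·) '' kfreeSet K k} := by
  classical
  ext X
  rw [mem_closure_set]
  constructor
  · intro hX F
    obtain ⟨t, ht⟩ := approx k hk X hX F
    exact ⟨_, ⟨t, rfl⟩, fun x hx => (ht x hx).trans (mem_translate k t x).symm⟩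
  · intro h P hP hP0
    by_contra! hcon
    choose y hyX hy using hcon
    have hfin : Finite (𝓞 K ⧸ P ^ k) :=
      Ring.HasFiniteQuotients.finiteQuotient (pow_ne_zero k hP0)
    have := Fintype.ofFinite (𝓞 K ⧸ P ^ k)
    obtain ⟨_, ⟨t, rfl⟩, hF⟩ := h (Finset.univ.image fun q : 𝓞 K ⧸ P ^ k => y (Quotient.out q))
    set q : 𝓞 K ⧸ P ^ k := Ideal.Quotient.mk _ t
    have h1 := (hF (y (Quotient.out q)) (Finset.mem_image_of_mem _ (Finset.mem_univ q))).mp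
      (hyX _)
    rw [mem_translate] at h1
    refine h1 P hP hP0 ?_
    have h2 : Quotient.out q - t ∈ P ^ k :=
      Ideal.Quotient.eq.mp (Ideal.Quotient.mk_out q)
    have := (P ^ k).add_mem (hy (Quotient.out q)) h2
    convert this using 1; ring
end

section
/- Let K be a totally real number field and let L be a finite-dimensional reduced commutative ℚ-algebra (an étale ℚ-algebra), with 𝓞_L = integral closure of ℤ in L. Let A : 𝓞_K → 𝓞_L be a ℤ-linear map with A(𝓞_K^×) ⊆ 𝓞_L^×. Then there exist a ℚ-algebra homomorphism τ : K → L and a unit ε ∈ 𝓞_L^× such that A(x) = ε·τ(x) for all x ∈ 𝓞_K. -/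
open NumberField

theorem ulm_dirichlet {K : Type*} [Field K] [NumberField K]
    (hreal : ∀ φ : K →+* ℂ, ∀ x : K, (φ x).im = 0) (n : (K →+* ℂ) → ℝ)
    (h : ∀ u : (𝓞 K)ˣ, ∑ σ : K →+* ℂ, n σ * Real.log ‖σ (u : K)‖ = 0) (σ τ : K →+* ℂ) :
    n σ = n τ := by
  classical
  have hR : ∀ φ : K →+* ℂ, ComplexEmbedding.IsReal φ := by
    intro φ
    rw [ComplexEmbedding.isReal_iff]
    ext x
    rw [ComplexEmbedding.conjugate_coe_eq]
    exact Complex.conj_eq_iff_im.mpr (hreal φ x)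
  let e : (K →+* ℂ) ≃ InfinitePlace K :=
    { toFun := InfinitePlace.mk
      invFun := InfinitePlace.embedding
      left_inv := fun φ => InfinitePlace.embedding_mk_eq_of_isReal (hR φ)
      right_inv := fun w => InfinitePlace.mk_embedding w }
  have hmult : ∀ w : InfinitePlace K, w.mult = 1 := fun w => by
    rw [InfinitePlace.mult, if_pos (InfinitePlace.isReal_iff.mpr (hR _))]
  let N : InfinitePlace K → ℝ := fun w => n w.embedding
  have h' : ∀ u : (𝓞 K)ˣ, ∑ w : InfinitePlace K, N w * Real.log (w (u : K)) = 0 := by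
    intro u
    rw [← h u, ← e.sum_comp]
    refine Finset.sum_congr rfl fun φ _ => ?_
    have : N (e φ) = n φ := congrArg n (e.left_inv φ)
    rw [this]
    rfl
  let w0 : InfinitePlace K := Units.dirichletUnitTheorem.w₀
  let f : Units.dirichletUnitTheorem.logSpace K →ₗ[ℝ] ℝ :=
    ∑ w, (N w.1 - N w0) • LinearMap.proj w
  have hf : f = 0 := by
    apply LinearMap.ext_on (Units.dirichletUnitTheorem.unitLattice_span_eq_top K)
    rintro _ ⟨u, -, rfl⟩
    have h1 := Units.sum_mult_mul_log (Additive.toMul u)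
    have h2 := h' (Additive.toMul u)
    simp only [hmult, Nat.cast_one, one_mul] at h1
    have h3 : ∑ w : InfinitePlace K, (N w - N w0) * Real.log (w ((Additive.toMul u : (𝓞 K)ˣ) : K)) = 0 := by
      simp only [sub_mul, Finset.sum_sub_distrib, ← Finset.mul_sum, h1, h2]
      simp
    rw [Fintype.sum_eq_add_sum_subtype_ne _ w0] at h3
    simp only [sub_self, zero_mul, zero_add] at h3
    simp only [f, LinearMap.sum_apply, LinearMap.smul_apply, LinearMap.proj_apply, smul_eq_mul,
      LinearMap.zero_apply]
    rw [← h3]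
    refine Finset.sum_congr rfl fun w _ => ?_
    have : ((Units.logEmbedding K).toIntLinearMap u) w
      = (w.1.mult : ℝ) * Real.log (w.1 ((Additive.toMul u : (𝓞 K)ˣ) : K)) := rfl
    rw [this, hmult]
    simp
  have hN : ∀ w, N w = N w0 := by
    intro w
    by_cases hw : w = w0
    · rw [hw]
    · have := congrArg (fun g => g (Pi.single ⟨w, hw⟩ 1)) hf
      simp only [f, LinearMap.sum_apply, LinearMap.smul_apply, LinearMap.proj_apply, smul_eq_mul,
        LinearMap.zero_apply, Pi.single_apply] at this
      simp at this
      linarith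
  have hn : ∀ φ, n φ = N (e φ) := fun φ => (congrArg n (e.left_inv φ)).symm
  rw [hn, hn, hN, hN (e τ)]

theorem ulm_density {K : Type*} [Field K] [NumberField K]
    (hreal : ∀ φ : K →+* ℂ, ∀ x : K, (φ x).im = 0)
    (P : MvPolynomial (K →+* ℂ) ℂ)
    (hP : ∀ u : (𝓞 K)ˣ, MvPolynomial.eval (fun σ : K →+* ℂ => σ (u : K)) P = 0)
    (y : (K →+* ℂ) → ℂ) (hy : ∏ σ, y σ = 1) : MvPolynomial.eval y P = 0 := by
  classical
  let χ : ((K →+* ℂ) →₀ ℕ) → ((𝓞 K)ˣ →* ℂ) := fun m =>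
    { toFun := fun u => ∏ σ : K →+* ℂ, σ (u : K) ^ m σ
      map_one' := by simp
      map_mul' := fun u v => by simp [mul_pow, Finset.prod_mul_distrib] }
  have hy0 : ∀ σ, y σ ≠ 0 := fun σ h0 => by
    rw [Finset.prod_eq_zero (Finset.mem_univ σ) h0] at hy
    exact zero_ne_one hy
  have hχ : ∀ m m', χ m = χ m' → ∏ σ, y σ ^ m σ = ∏ σ, y σ ^ m' σ := by
    intro m m' hmm
    have key := ulm_dirichlet hreal (fun σ => (m σ : ℝ) - m' σ) (by
      intro u
      have h1 : ∏ σ : K →+* ℂ, σ (u : K) ^ m σ = ∏ σ : K →+* ℂ, σ (u : K) ^ m' σ :=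
        congrArg (fun g => g u) hmm
      have hne : ∀ σ : K →+* ℂ, ‖σ (u : K)‖ ≠ 0 := fun σ => by
        simp
      have h2 := congrArg (fun z : ℂ => Real.log ‖z‖) h1
      simp only [norm_prod, norm_pow] at h2
      rw [Real.log_prod (fun σ _ => pow_ne_zero _ (hne σ)),
        Real.log_prod (fun σ _ => pow_ne_zero _ (hne σ))] at h2
      simp only [Real.log_pow] at h2
      simp only [sub_mul, Finset.sum_sub_distrib, h2, sub_self])
    obtain ⟨σ0⟩ : Nonempty (K →+* ℂ) := inferInstance
    have key2 : ∀ σ, m σ + m' σ0 = m' σ + m σ0 := by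
      intro σ
      have := key σ σ0
      have h3 : (m σ : ℝ) + m' σ0 = m' σ + m σ0 := by linarith
      exact_mod_cast h3
    have e1 : ∀ k : ℕ, ∏ σ, y σ ^ k = 1 := fun k => by rw [Finset.prod_pow, hy, one_pow]
    calc ∏ σ, y σ ^ m σ = (∏ σ, y σ ^ m σ) * ∏ σ, y σ ^ m' σ0 := by rw [e1, mul_one]
      _ = (∏ σ, y σ ^ m' σ) * ∏ σ, y σ ^ m σ0 := by
        rw [← Finset.prod_mul_distrib, ← Finset.prod_mul_distrib]
        refine Finset.prod_congr rfl fun σ _ => ?_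
        rw [← pow_add, ← pow_add, key2]
      _ = _ := by rw [e1, mul_one]
  have hind := linearIndependent_iff'.mp (linearIndependent_monoidHom (𝓞 K)ˣ ℂ)
    (P.support.image χ) (fun ψ => ∑ m ∈ P.support with χ m = ψ, P.coeff m) (by
      funext u
      have := hP u
      rw [MvPolynomial.eval_eq',
        ← Finset.sum_fiberwise_of_maps_to (g := χ) (t := P.support.image χ)
          (fun m hm => Finset.mem_image_of_mem _ hm)] at this
      rw [Finset.sum_apply, Pi.zero_apply, ← this]
      refine Finset.sum_congr rfl fun ψ _ => ?_
      rw [Pi.smul_apply, smul_eq_mul, Finset.sum_mul]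
      refine Finset.sum_congr rfl fun m hm => ?_
      rw [← (Finset.mem_filter.mp hm).2]
      rfl)
  rw [MvPolynomial.eval_eq',
        ← Finset.sum_fiberwise_of_maps_to (g := χ) (t := P.support.image χ)
          (fun m hm => Finset.mem_image_of_mem _ hm)]
  refine Finset.sum_eq_zero fun ψ hψ => ?_
  obtain ⟨m0, -, rfl⟩ := Finset.mem_image.mp hψ
  have := hind _ hψ
  rw [Finset.sum_congr rfl (g := fun m => P.coeff m * ∏ σ, y σ ^ m0 σ)
    (fun m hm => by rw [hχ m m0 (Finset.mem_filter.mp hm).2]), ← Finset.sum_mul, this, zero_mul]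

theorem ulm_exists_zero {ι : Type*} [Fintype ι] (c : ι → ℂ) (i j : ι) (hij : i ≠ j)
    (hi : c i ≠ 0) (hj : c j ≠ 0) : ∃ y : ι → ℂ, ∏ k, y k = 1 ∧ ∑ k, c k * y k = 0 := by
  classical
  obtain ⟨z, hz, hz0⟩ : ∃ z : ι → ℂ, (∀ k, z k ≠ 0) ∧ ∑ k, c k * z k = 0 := by
    let s : ℂ := ∑ k ∈ (Finset.univ.erase i).erase j, c k
    obtain ⟨t, ht0, hts⟩ : ∃ t : ℂ, t ≠ 0 ∧ -s - t ≠ 0 := by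
      by_cases h : s = -1
      · exact ⟨2, by norm_num, by rw [h]; norm_num⟩
      · exact ⟨1, one_ne_zero, fun h' => h (by linear_combination -h')⟩
    refine ⟨fun k => if k = i then t / c i else if k = j then (-s - t) / c j else 1, ?_, ?_⟩
    · intro k
      dsimp only
      split_ifs
      · exact div_ne_zero ht0 hi
      · exact div_ne_zero hts hj
      · exact one_ne_zero
    · rw [← Finset.add_sum_erase _ _ (Finset.mem_univ i),
        ← Finset.add_sum_erase _ _ (Finset.mem_erase.mpr ⟨hij.symm, Finset.mem_univ j⟩)]
      have : ∑ k ∈ (Finset.univ.erase i).erase j,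
          c k * (if k = i then t / c i else if k = j then (-s - t) / c j else 1) = s := by
        refine Finset.sum_congr rfl fun k hk => ?_
        simp only [Finset.mem_erase] at hk
        rw [if_neg hk.2.1, if_neg hk.1, mul_one]
      rw [this]
      dsimp only
      rw [if_pos rfl, if_neg hij.symm, if_pos rfl]
      field_simp
      ring
  have hprod : ∏ k, z k ≠ 0 := Finset.prod_ne_zero_iff.mpr fun k _ => hz k
  obtain ⟨l, hl⟩ := IsAlgClosed.exists_pow_nat_eq (∏ k, z k)⁻¹
    (n := Fintype.card ι) (Fintype.card_pos_iff.mpr ⟨i⟩)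
  refine ⟨fun k => l * z k, ?_, ?_⟩
  · rw [Finset.prod_mul_distrib, Finset.prod_const, Finset.card_univ, hl, inv_mul_cancel₀ hprod]
  · simp only [mul_left_comm _ l, ← Finset.mul_sum, hz0, mul_zero]

theorem ulm_form {K : Type*} [Field K] [NumberField K] (g : 𝓞 K →+ ℂ) :
    ∃ c : (K →+* ℂ) → ℂ, ∀ x : 𝓞 K, g x = ∑ σ : K →+* ℂ, c σ * σ (x : K) := by
  classical
  let b := RingOfIntegers.basis K
  let ℓ : ((K →+* ℂ) → ℂ) →ₗ[ℂ] ℂ :=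
    (canonicalEmbedding.latticeBasis K).constr ℂ (fun i => g (b i))
  refine ⟨fun σ => ℓ (Pi.single σ 1), fun x => ?_⟩
  have h1 : ∀ x : 𝓞 K, g x = ℓ (canonicalEmbedding K (x : K)) := by
    let F1 : 𝓞 K →ₗ[ℤ] ℂ := g.toIntLinearMap
    let F2 : 𝓞 K →ₗ[ℤ] ℂ := ((ℓ.toAddMonoidHom.comp (canonicalEmbedding K).toAddMonoidHom).comp
      (algebraMap (𝓞 K) K).toAddMonoidHom).toIntLinearMap
    have : F1 = F2 := by
      refine b.ext fun i => ?_
      change g (b i) = ℓ (canonicalEmbedding K (b i : K))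
      have h2 : canonicalEmbedding K (b i : K) = canonicalEmbedding.latticeBasis K i := by
        rw [canonicalEmbedding.latticeBasis_apply, integralBasis_apply]
      rw [h2, Module.Basis.constr_basis]
    intro x
    exact congrArg (fun f => f x) this
  rw [h1, LinearMap.pi_apply_eq_sum_univ ℓ]
  refine Finset.sum_congr rfl fun σ _ => ?_
  rw [smul_eq_mul, mul_comm, canonicalEmbedding.apply_at]
  congr 2
  funext τ
  simp [Pi.single_apply, eq_comm]

theorem ulm_field {K F : Type*} [Field K] [NumberField K] [Field F] [NumberField F]
    (hreal : ∀ φ : K →+* ℂ, ∀ x : K, (φ x).im = 0) (B : 𝓞 K →+ 𝓞 F)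
    (hB : ∀ u : (𝓞 K)ˣ, IsUnit (B u)) (h1 : B 1 = 1) (x y : 𝓞 K) :
    B (x * y) = B x * B y := by
  classical
  have hc := fun φ : F →ₐ[ℚ] ℂ => ulm_form
    (((φ : F →+* ℂ).comp (algebraMap (𝓞 F) F)).toAddMonoidHom.comp B)
  choose c hc using hc
  have hc' : ∀ (φ : F →ₐ[ℚ] ℂ) (x : 𝓞 K), φ (B x : F) = ∑ σ : K →+* ℂ, c φ σ * σ (x : K) := hc
  let P : MvPolynomial (K →+* ℂ) ℂ :=
    (∏ φ : F →ₐ[ℚ] ℂ, ∑ σ : K →+* ℂ, MvPolynomial.C (c φ σ) * MvPolynomial.X σ) ^ 2 - 1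
  have hP : ∀ y, MvPolynomial.eval y P = (∏ φ : F →ₐ[ℚ] ℂ, ∑ σ : K →+* ℂ, c φ σ * y σ) ^ 2 - 1 := by
    intro y
    simp [P, map_prod, map_sum]
  have hPu : ∀ u : (𝓞 K)ˣ, MvPolynomial.eval (fun σ : K →+* ℂ => σ (u : K)) P = 0 := by
    intro u
    rw [hP]
    simp only [← hc']
    rw [← Algebra.norm_eq_prod_embeddings ℚ ℂ]
    have h2 := NumberField.isUnit_iff_norm.mp (hB u)
    rw [RingOfIntegers.coe_norm] at h2
    have h3 : (Algebra.norm ℚ (B u : F)) ^ 2 = 1 := by rw [← sq_abs, h2, one_pow]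
    rw [← map_pow, h3]
    simp
  have hone : ∀ (φ : F →ₐ[ℚ] ℂ) (i j : K →+* ℂ), i ≠ j → c φ i ≠ 0 → c φ j = 0 := by
    intro φ i j hij hi
    by_contra hj
    obtain ⟨y, hy1, hy0⟩ := ulm_exists_zero (c φ) i j hij hi hj
    have := ulm_density hreal P hPu y hy1
    rw [hP, Finset.prod_eq_zero (Finset.mem_univ φ) hy0] at this
    norm_num at this
  obtain ⟨φ⟩ : Nonempty (F →ₐ[ℚ] ℂ) :=
    ⟨(Classical.arbitrary (F →+* ℂ)).toRatAlgHom⟩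
  have hφ1 := hc' φ 1
  rw [h1] at hφ1
  simp only [map_one, mul_one] at hφ1
  obtain ⟨σ, hσ⟩ : ∃ σ, c φ σ ≠ 0 := by
    by_contra! hh
    simp [hh] at hφ1
  have hform : ∀ x : 𝓞 K, φ (B x : F) = σ (x : K) := by
    have h0 : ∀ τ, τ ≠ σ → c φ τ = 0 := fun τ hτ => hone φ σ τ hτ.symm hσ
    rw [Finset.sum_eq_single σ (fun τ _ hτ => h0 τ hτ) (by simp)] at hφ1
    intro x
    rw [hc', Finset.sum_eq_single σ (fun τ _ hτ => by rw [h0 τ hτ, zero_mul]) (by simp), ← hφ1,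
      one_mul]
  apply RingOfIntegers.coe_injective
  apply φ.toRingHom.injective
  change φ (B (x * y) : F) = φ ((B x * B y : 𝓞 F) : F)
  rw [hform]
  simp [hform]

theorem ulm_nf {L F : Type*} [CommRing L] [Algebra ℚ L] [FiniteDimensional ℚ L] [Field F]
    [CharZero F] (f : L →+* F) (hf : Function.Surjective f) : NumberField F :=
  { to_charZero := inferInstance
    to_finiteDimensional := Module.Finite.of_surjective f.toRatAlgHom.toLinearMap hf }

/-- Units theorem: let `K` be a totally real number field and `L` a finite-dimensional
reduced commutative ℚ-algebra (an étale ℚ-algebra) with ring of integers the integral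
closure of ℤ in `L`. Any ℤ-linear map `A : 𝓞 K → 𝓞 L` mapping units to units is of the
form `x ↦ ε·τ(x)` for a ℚ-algebra homomorphism `τ : K → L` and a unit `ε ∈ 𝓞 L ˣ`. -/
theorem units_linear_map {K L : Type*} [Field K] [NumberField K]
    (hreal : ∀ φ : K →+* ℂ, ∀ x : K, (φ x).im = 0)
    [CommRing L] [Algebra ℚ L] [FiniteDimensional ℚ L] [IsReduced L]
    (A : 𝓞 K →ₗ[ℤ] (integralClosure ℤ L))
    (hA : ∀ x : 𝓞 K, IsUnit x → IsUnit (A x)) :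
    ∃ (τ : K →ₐ[ℚ] L) (ε : (integralClosure ℤ L)ˣ),
      ∀ x : 𝓞 K, (A x : L) = ((ε : integralClosure ℤ L) : L) * τ (x : K) := by
  classical
  obtain ⟨ε, hε⟩ := hA 1 isUnit_one
  let B : 𝓞 K → integralClosure ℤ L := fun x => (↑ε⁻¹ : integralClosure ℤ L) * A x
  have hB1 : B 1 = 1 := by simp [B, ← hε]
  have hB0 : B 0 = 0 := by simp [B]
  have hBadd : ∀ x y, B (x + y) = B x + B y := fun x y => by simp [B, mul_add]
  have hAB : ∀ x, A x = ε * B x := fun x => by simp [B]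
  have hBu : ∀ u : (𝓞 K)ˣ, IsUnit (B u) := fun u => (ε⁻¹).isUnit.mul (hA _ u.isUnit)
  have : IsArtinianRing L := IsArtinianRing.of_finite ℚ L
  have hBmul : ∀ x y, B (x * y) = B x * B y := by
    intro x y
    apply Subtype.ext
    rw [← sub_eq_zero]
    have hj : (⊥ : Ideal L).jacobson = ⊥ := by
      rw [IsArtinianRing.jacobson_eq_radical]
      exact (nilradical_eq_zero L)
    rw [← Ideal.mem_bot, ← hj, Ideal.jacobson, Ideal.mem_sInf]
    rintro M ⟨-, hM⟩
    let : Field (L ⧸ M) := Ideal.Quotient.field M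
    have : CharZero (L ⧸ M) := algebraRat.charZero _
    have : NumberField (L ⧸ M) := ulm_nf (Ideal.Quotient.mk M) Ideal.Quotient.mk_surjective
    let π : integralClosure ℤ L →+* 𝓞 (L ⧸ M) :=
      ((Ideal.Quotient.mk M).toIntAlgHom.mapIntegralClosure).toRingHom
    have := ulm_field hreal (π.toAddMonoidHom.comp ⟨⟨B, hB0⟩, hBadd⟩)
      (fun u => (hBu u).map π) (by
        change π (B 1) = 1
        rw [hB1, map_one]) x y
    have h2 : π (B (x * y)) = π (B x) * π (B y) := this
    rw [← map_mul] at h2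
    exact Ideal.Quotient.eq.mp (congrArg (fun z : 𝓞 (L ⧸ M) => (z : L ⧸ M)) h2)
  let g : 𝓞 K →+* L := (integralClosure ℤ L).val.toRingHom.comp
    { toFun := B, map_one' := hB1, map_zero' := hB0, map_add' := hBadd, map_mul' := hBmul }
  have hg : ∀ x, g x = (B x : L) := fun _ => rfl
  have : IsLocalization (Algebra.algebraMapSubmonoid (𝓞 K) (nonZeroDivisors ℤ)) K :=
    IsIntegralClosure.isLocalization ℤ ℚ K (𝓞 K)
  let τ : K →+* L := IsLocalization.lift
    (M := Algebra.algebraMapSubmonoid (𝓞 K) (nonZeroDivisors ℤ)) (g := g) (by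
      rintro ⟨_, n, hn, rfl⟩
      have hn0 : (n : ℚ) ≠ 0 := by exact_mod_cast nonZeroDivisors.ne_zero hn
      have h2 : g (algebraMap ℤ (𝓞 K) n) = algebraMap ℚ L (n : ℚ) := by simp
      rw [h2]
      exact (IsUnit.mk0 _ hn0).map (algebraMap ℚ L))
  refine ⟨τ.toRatAlgHom, ε, fun x => ?_⟩
  have h3 : τ (x : K) = g x := IsLocalization.lift_eq _ x
  have h4 : τ.toRatAlgHom (x : K) = τ (x : K) := rfl
  rw [h4, h3, hg, hAB]
  rfl
end
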